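/- arXiv:2601.07427 — 8 statements merged into one kernel-verified Lean document; each statement's English description precedes it below -/
import Mathlib

section
/- Let n be a positive integer and A an n×n Hermitian complex matrix. Then the minimum of Tr(X) over all positive semidefinite complex matrices X satisfying X + A positive semidefinite is attained and equals the absolute value of the sum of the negative eigenvalues of A (counted with multiplicity). -/
open Matrix Finset
open scoped ComplexOrder

/-- For a positive integer `n` and an `n × n` Hermitian complex matrix `A`,
the minimum of `Tr X` over positive semidefinite `X` with `X + A` positive semidefinite is
attained and equals the absolute value of the sum of the negative eigenvalues of `A`
(counted with multiplicity). -/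
theorem stmt_0 (n : ℕ) (hn : 0 < n) (A : Matrix (Fin n) (Fin n) ℂ)
    (hA : A.IsHermitian) :
    IsLeast {t : ℝ | ∃ X : Matrix (Fin n) (Fin n) ℂ,
        X.PosSemidef ∧ (X + A).PosSemidef ∧ t = X.trace.re}
      |∑ i ∈ Finset.univ.filter (fun i => hA.eigenvalues i < 0), hA.eigenvalues i| := by
  have hsum : |∑ i ∈ Finset.univ.filter (fun i => hA.eigenvalues i < 0), hA.eigenvalues i|
      = ∑ i, max 0 (-hA.eigenvalues i) := by
    rw [abs_of_nonpos, ← Finset.sum_neg_distrib, Finset.sum_filter]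
    · refine Finset.sum_congr rfl fun i _ => ?_
      split_ifs with h
      · rw [max_eq_right (by linarith)]
      · rw [max_eq_left (by linarith)]
    · refine Finset.sum_nonpos fun i hi => ?_
      exact (Finset.mem_filter.mp hi).2.le
  rw [hsum]
  obtain ⟨U, l, hl, h1, h2, hAU⟩ : ∃ (U : Matrix (Fin n) (Fin n) ℂ) (l : Fin n → ℝ),
      l = hA.eigenvalues ∧ Uᴴ * U = 1 ∧ U * Uᴴ = 1 ∧
      A = U * diagonal (fun i => (l i : ℂ)) * Uᴴ := by
    refine ⟨hA.eigenvectorUnitary, _, rfl, ?_, ?_, ?_⟩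
    · exact (Unitary.mem_iff.mp hA.eigenvectorUnitary.2).1
    · exact (Unitary.mem_iff.mp hA.eigenvectorUnitary.2).2
    · have := hA.spectral_theorem
      rw [Unitary.conjStarAlgAut_apply] at this
      exact this
  rw [← hl]
  clear hl hsum
  constructor
  · refine ⟨U * diagonal (fun i => ((max 0 (-l i) : ℝ) : ℂ)) * Uᴴ, ?_, ?_, ?_⟩
    · apply PosSemidef.mul_mul_conjTranspose_same
      refine PosSemidef.diagonal fun i => ?_
      exact Complex.zero_le_real.mpr (le_max_left _ _)
    · rw [hAU, ← add_mul, ← mul_add, diagonal_add]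
      apply PosSemidef.mul_mul_conjTranspose_same
      refine PosSemidef.diagonal fun i => ?_
      rw [← Complex.ofReal_add]
      refine Complex.zero_le_real.mpr ?_
      linarith [le_max_right 0 (-l i)]
    · rw [Matrix.trace_mul_comm, ← mul_assoc, h1, one_mul, trace_diagonal, Complex.re_sum]
      simp only [Complex.ofReal_re]
  · rintro t ⟨X, hX, hXA, rfl⟩
    have hY := hX.conjTranspose_mul_mul_same U
    have hZ := hXA.conjTranspose_mul_mul_same U
    have e : Uᴴ * (X + A) * U = Uᴴ * X * U + diagonal (fun i => (l i : ℂ)) := by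
      have : Uᴴ * A * U = diagonal (fun i => (l i : ℂ)) := by
        rw [hAU]
        calc _ = (Uᴴ * U) * diagonal (fun i => (l i : ℂ)) * (Uᴴ * U) := by
              simp only [mul_assoc]
          _ = _ := by rw [h1, one_mul, mul_one]
      rw [mul_add, add_mul, this]
    have ht : X.trace = (Uᴴ * X * U).trace := by
      rw [Matrix.trace_mul_comm, ← mul_assoc, h2, one_mul]
    rw [e] at hZ
    rw [ht, Matrix.trace, Complex.re_sum]
    refine Finset.sum_le_sum fun i _ => max_le ?_ ?_
    · exact (Complex.le_def.mp (hY.diag_nonneg (i := i))).1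
    · have := (Complex.le_def.mp (hZ.diag_nonneg (i := i))).1
      simp only [Matrix.add_apply, diagonal_apply_eq, Complex.add_re, Complex.ofReal_re,
        Complex.zero_re] at this
      rw [Matrix.diag_apply]
      linarith
end

section
/- The GME negativity is convex: for states ρ_1, …, ρ_m on the multipartite system and nonnegative reals p_1, …, p_m with Σ_i p_i = 1, one has N(Σ_i p_i ρ_i) ≤ Σ_i p_i N(ρ_i). -/
open Matrix Finset
open scoped ComplexOrder
open Classical

/-- The absolute value of the sum of the negative eigenvalues of a matrix
(zero if the matrix is not Hermitian). -/
noncomputable def negSum {n : Type*} [Fintype n] [DecidableEq n]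
    (M : Matrix n n ℂ) : ℝ :=
  if h : M.IsHermitian then
    |∑ i ∈ Finset.univ.filter (fun i => h.eigenvalues i < 0), h.eigenvalues i|
  else 0

/-- Partial transpose of the tensor factors belonging to the parties in `S`. -/
def ptS {V : Type*} [DecidableEq V] (d : V → ℕ) (S : Finset V)
    (M : Matrix ((v : V) → Fin (d v)) ((v : V) → Fin (d v)) ℂ) :
    Matrix ((v : V) → Fin (d v)) ((v : V) → Fin (d v)) ℂ :=
  Matrix.of fun x y =>
    M (fun v => if v ∈ S then y v else x v) (fun v => if v ∈ S then x v else y v)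

/-- A quantum state: positive semidefinite with unit trace. -/
def IsState {n : Type*} [Fintype n] (ρ : Matrix n n ℂ) : Prop :=
  ρ.PosSemidef ∧ ρ.trace = 1

/-- The GME negativity: infimum over all finite decompositions `ρ = Σ p_S ρ_S`, with each term
labelled by a nonempty proper subset `S ⊂ V`, `p_S ≥ 0`, and each `ρ_S` a state, of
`Σ p_S N_S(ρ_S)`, where `N_S` is the bipartite negativity across `S | Sᶜ`. -/
noncomputable def GMEneg {V : Type*} [Fintype V] [DecidableEq V] (d : V → ℕ)
    (ρ : Matrix ((v : V) → Fin (d v)) ((v : V) → Fin (d v)) ℂ) : ℝ :=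
  sInf {r : ℝ | ∃ (m : ℕ) (S : Fin m → Finset V) (p : Fin m → ℝ)
      (σ : Fin m → Matrix ((v : V) → Fin (d v)) ((v : V) → Fin (d v)) ℂ),
      (∀ k, (S k).Nonempty) ∧ (∀ k, S k ≠ Finset.univ) ∧ (∀ k, 0 ≤ p k) ∧
      (∀ k, IsState (σ k)) ∧ ρ = ∑ k, (p k : ℂ) • σ k ∧
      r = ∑ k, p k * negSum (ptS d (S k) (σ k))}


theorem negSum_nonneg' {n : Type*} [Fintype n] [DecidableEq n] (M : Matrix n n ℂ) :
    0 ≤ negSum M := by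
  unfold negSum
  split_ifs
  · exact abs_nonneg _
  · exact le_rfl

theorem GMEneg_nonneg' {V : Type*} [Fintype V] [DecidableEq V] (d : V → ℕ)
    (ρ : Matrix ((v : V) → Fin (d v)) ((v : V) → Fin (d v)) ℂ) : 0 ≤ GMEneg d ρ := by
  unfold GMEneg
  apply Real.sInf_nonneg
  rintro r ⟨m, S, p, σ, -, -, hp, -, -, rfl⟩
  exact Finset.sum_nonneg fun k _ => mul_nonneg (hp k) (negSum_nonneg' _)

theorem GMEneg_le' {V : Type*} [Fintype V] [DecidableEq V] (d : V → ℕ)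
    (ρ : Matrix ((v : V) → Fin (d v)) ((v : V) → Fin (d v)) ℂ)
    {ι : Type*} [Fintype ι] (S : ι → Finset V) (p : ι → ℝ)
    (σ : ι → Matrix ((v : V) → Fin (d v)) ((v : V) → Fin (d v)) ℂ)
    (h1 : ∀ k, (S k).Nonempty) (h2 : ∀ k, S k ≠ Finset.univ) (h3 : ∀ k, 0 ≤ p k)
    (h4 : ∀ k, IsState (σ k)) (h5 : ρ = ∑ k, (p k : ℂ) • σ k) :
    GMEneg d ρ ≤ ∑ k, p k * negSum (ptS d (S k) (σ k)) := by
  unfold GMEneg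
  apply csInf_le
  · refine ⟨0, ?_⟩
    rintro r ⟨m, S, p, σ, -, -, hp, -, -, rfl⟩
    exact Finset.sum_nonneg fun k _ => mul_nonneg (hp k) (negSum_nonneg' _)
  · let e := (Fintype.equivFin ι).symm
    refine ⟨Fintype.card ι, S ∘ e, p ∘ e, σ ∘ e, fun k => h1 _, fun k => h2 _, fun k => h3 _,
      fun k => h4 _, ?_, ?_⟩
    · rw [h5]
      exact (Equiv.sum_comp e (fun k => (p k : ℂ) • σ k)).symm
    · exact (Equiv.sum_comp e (fun k => p k * negSum (ptS d (S k) (σ k)))).symm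

/-- The GME negativity is convex. -/
theorem stmt_2 {V : Type*} [Fintype V] [DecidableEq V] (d : V → ℕ)
    (m : ℕ) (ρ : Fin m → Matrix ((v : V) → Fin (d v)) ((v : V) → Fin (d v)) ℂ)
    (hρ : ∀ i, IsState (ρ i)) (p : Fin m → ℝ) (hp : ∀ i, 0 ≤ p i)
    (hpsum : ∑ i, p i = 1) :
    GMEneg d (∑ i, (p i : ℂ) • ρ i) ≤ ∑ i, p i * GMEneg d (ρ i) := by
  by_cases hS : ∃ S : Finset V, S.Nonempty ∧ S ≠ Finset.univ
  · obtain ⟨S0, hS1, hS2⟩ := hS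
    apply le_of_forall_pos_le_add
    intro ε hε
    have key : ∀ i, ∃ (n : ℕ) (S : Fin n → Finset V) (q : Fin n → ℝ)
        (σ : Fin n → Matrix ((v : V) → Fin (d v)) ((v : V) → Fin (d v)) ℂ),
        (∀ k, (S k).Nonempty) ∧ (∀ k, S k ≠ Finset.univ) ∧ (∀ k, 0 ≤ q k) ∧
        (∀ k, IsState (σ k)) ∧ ρ i = ∑ k, (q k : ℂ) • σ k ∧
        ∑ k, q k * negSum (ptS d (S k) (σ k)) < GMEneg d (ρ i) + ε := by
      intro i
      have hlt : GMEneg d (ρ i) < GMEneg d (ρ i) + ε := by linarith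
      conv_lhs at hlt => unfold GMEneg
      obtain ⟨r, ⟨n, S, q, σ, a1, a2, a3, a4, a5, rfl⟩, hr⟩ := exists_lt_of_csInf_lt
        (by exact ⟨_, 1, fun _ => S0, fun _ => 1, fun _ => ρ i, fun _ => hS1, fun _ => hS2,
          fun _ => zero_le_one, fun _ => hρ i, by simp, rfl⟩) hlt
      exact ⟨n, S, q, σ, a1, a2, a3, a4, a5, hr⟩
    choose n S q σ a1 a2 a3 a4 a5 a6 using key
    have := GMEneg_le' d (∑ i, (p i : ℂ) • ρ i) (ι := Σ i, Fin (n i))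
      (fun x => S x.1 x.2) (fun x => p x.1 * q x.1 x.2) (fun x => σ x.1 x.2)
      (fun x => a1 _ _) (fun x => a2 _ _) (fun x => mul_nonneg (hp _) (a3 _ _))
      (fun x => a4 _ _) (by
        rw [Fintype.sum_sigma]
        refine Finset.sum_congr rfl fun i _ => ?_
        conv_lhs => rw [a5 i]
        rw [Finset.smul_sum]
        refine Finset.sum_congr rfl fun k _ => ?_
        rw [smul_smul]
        push_cast
        rfl)
    refine this.trans ?_
    rw [Fintype.sum_sigma]
    calc _ ≤ ∑ i, p i * (GMEneg d (ρ i) + ε) := by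
          refine Finset.sum_le_sum fun i _ => ?_
          simp only [mul_assoc]
          rw [← Finset.mul_sum]
          exact mul_le_mul_of_nonneg_left (a6 i).le (hp i)
      _ = _ := by
          simp only [mul_add]
          rw [Finset.sum_add_distrib, ← Finset.sum_mul, hpsum, one_mul]
  · have h0 : GMEneg d (∑ i, (p i : ℂ) • ρ i) ≤ 0 := by
      unfold GMEneg
      apply Real.sInf_nonpos
      rintro r ⟨n, S, q, σ, b1, b2, -, -, -, rfl⟩
      exact Finset.sum_nonpos fun k _ => absurd ⟨S k, b1 k, b2 k⟩ hS
    exact h0.trans (Finset.sum_nonneg fun i _ => mul_nonneg (hp i) (GMEneg_nonneg' d _))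
end

section
/- Weak duality for GME negativity: let W be a Hermitian matrix on the multipartite system such that for every nonempty proper subset S ⊂ V there exists a matrix Q_S with 0 ⪯ Q_S ⪯ I and Q_S^{Γ_S} ⪯ W. Then for every state ρ one has −Tr(Wρ) ≤ N(ρ). -/
open Matrix Finset
open scoped ComplexOrder
open Classical

theorem aux_trace_nonneg {n : Type*} [Fintype n] (A B : Matrix n n ℂ)
    (hA : A.PosSemidef) (hB : B.PosSemidef) : 0 ≤ (A * B).trace.re := by
  classical
  obtain ⟨C, rfl⟩ : ∃ C : Matrix n n ℂ, B = Cᴴ * C := by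
    open scoped MatrixOrder in
    exact CStarAlgebra.nonneg_iff_eq_star_mul_self.mp hB.nonneg
  have h : (A * (Cᴴ * C)).trace = (C * A * Cᴴ).trace := by
    rw [← Matrix.mul_assoc, Matrix.trace_mul_comm, Matrix.mul_assoc]
  rw [h]
  exact (Complex.le_def.mp (hA.mul_mul_conjTranspose_same C).trace_nonneg).1

theorem aux_neg {n : Type*} [Fintype n] [DecidableEq n] (M Q : Matrix n n ℂ)
    (hM : M.IsHermitian) (hQ : Q.PosSemidef) (hQ1 : (1 - Q).PosSemidef) :
    -((Q * M).trace.re) ≤ negSum M := by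
  rw [negSum, dif_pos hM]
  set U : Matrix n n ℂ := (hM.eigenvectorUnitary : Matrix n n ℂ) with hU
  have hUU : Uᴴ * U = 1 := by
    have := Unitary.coe_star_mul_self hM.eigenvectorUnitary
    simpa [Matrix.star_eq_conjTranspose] using this
  have hspec : M = U * diagonal (fun i => (hM.eigenvalues i : ℂ)) * Uᴴ := by
    have := hM.spectral_theorem
    rw [Unitary.conjStarAlgAut_apply] at this
    exact this
  have htr : (Q * M).trace.re = ∑ i, ((Uᴴ * Q * U) i i).re * hM.eigenvalues i := by
    have : (Q * M).trace = ((Uᴴ * Q * U) * diagonal (fun i => (hM.eigenvalues i : ℂ))).trace := by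
      conv_lhs => rw [hspec]
      rw [← Matrix.mul_assoc, Matrix.trace_mul_comm]
      simp only [Matrix.mul_assoc]
    rw [this, Matrix.trace, Complex.re_sum]
    refine Finset.sum_congr rfl fun i _ => ?_
    rw [Matrix.diag_apply, Matrix.mul_diagonal, Complex.re_mul_ofReal]
  have h0 : ∀ i, 0 ≤ ((Uᴴ * Q * U) i i).re := fun i =>
    (Complex.le_def.mp ((hQ.conjTranspose_mul_mul_same U).diag_nonneg (i := i))).1
  have h1 : ∀ i, ((Uᴴ * Q * U) i i).re ≤ 1 := fun i => by
    have := (Complex.le_def.mp ((hQ1.conjTranspose_mul_mul_same U).diag_nonneg (i := i))).1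
    rw [Matrix.mul_sub, Matrix.sub_mul, Matrix.mul_one, hUU] at this
    simpa using this
  refine le_trans ?_ (neg_le_abs _)
  rw [htr, neg_le_neg_iff, Finset.sum_filter]
  refine Finset.sum_le_sum fun i _ => ?_
  split_ifs with h
  · nlinarith [h1 i]
  · exact mul_nonneg (h0 i) (not_lt.mp h)

theorem aux_pt_herm {V : Type*} [DecidableEq V] (d : V → ℕ) (S : Finset V)
    (M : Matrix ((v : V) → Fin (d v)) ((v : V) → Fin (d v)) ℂ) (hM : M.IsHermitian) :
    (ptS d S M).IsHermitian := by
  ext x y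
  simp only [ptS, Matrix.conjTranspose_apply, Matrix.of_apply]
  exact hM.apply _ _

theorem aux_pt_trace {V : Type*} [Fintype V] [DecidableEq V] (d : V → ℕ) (S : Finset V)
    (Q M : Matrix ((v : V) → Fin (d v)) ((v : V) → Fin (d v)) ℂ) :
    (ptS d S Q * M).trace = (Q * ptS d S M).trace := by
  simp only [Matrix.trace, Matrix.diag_apply, Matrix.mul_apply]
  rw [← Fintype.sum_prod_type', ← Fintype.sum_prod_type']
  let f : ((v : V) → Fin (d v)) × ((v : V) → Fin (d v)) →
      ((v : V) → Fin (d v)) × ((v : V) → Fin (d v)) := fun z =>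
    (fun v => if v ∈ S then z.2 v else z.1 v, fun v => if v ∈ S then z.1 v else z.2 v)
  have hf : Function.Involutive f := by
    rintro ⟨x, y⟩
    ext v <;> by_cases h : v ∈ S <;> simp [f, h]
  refine Fintype.sum_equiv hf.toPerm _ _ ?_
  rintro ⟨x, y⟩
  simp only [ptS, Matrix.of_apply, Function.Involutive.coe_toPerm, f]
  congr 2 <;> ext v <;> by_cases h : v ∈ S <;> simp [h]

/-- Weak duality for the GME negativity: if `W` is Hermitian and for every
nonempty proper subset `S ⊂ V` there is `Q_S` with `0 ⪯ Q_S ⪯ I` and `Q_S^{Γ_S} ⪯ W`, then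
`-Tr(Wρ) ≤ N(ρ)` for every state `ρ`. -/
theorem stmt_3 {V : Type*} [Fintype V] [DecidableEq V] (hV : 2 ≤ Fintype.card V) (d : V → ℕ)
    (W : Matrix ((v : V) → Fin (d v)) ((v : V) → Fin (d v)) ℂ) (hW : W.IsHermitian)
    (hcert : ∀ S : Finset V, S.Nonempty → S ≠ Finset.univ →
      ∃ Q : Matrix ((v : V) → Fin (d v)) ((v : V) → Fin (d v)) ℂ,
        Q.PosSemidef ∧ (1 - Q).PosSemidef ∧ (W - ptS d S Q).PosSemidef)
    (ρ : Matrix ((v : V) → Fin (d v)) ((v : V) → Fin (d v)) ℂ) (hρ : IsState ρ) :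
    -((W * ρ).trace.re) ≤ GMEneg d ρ := by
  unfold GMEneg
  have hpos : 0 < Fintype.card V := by omega
  haveI : Nontrivial V := Fintype.one_lt_card_iff_nontrivial.mp (by omega)
  obtain ⟨v⟩ : Nonempty V := inferInstance
  refine le_csInf ?_ ?_
  · refine ⟨_, 1, fun _ => {v}, fun _ => 1, fun _ => ρ, fun _ => Finset.singleton_nonempty v,
      fun _ h => ?_, fun _ => zero_le_one, fun _ => hρ, by simp, rfl⟩
    have := congrArg Finset.card h
    rw [Finset.card_singleton, Finset.card_univ] at this
    omega
  · rintro r ⟨m, S, p, σ, hS, hS', hp, hσ, rfl, rfl⟩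
    have htr : (W * ∑ k, (p k : ℂ) • σ k).trace.re = ∑ k, p k * (W * σ k).trace.re := by
      rw [Matrix.mul_sum, Matrix.trace_sum, Complex.re_sum]
      refine Finset.sum_congr rfl fun k _ => ?_
      rw [Matrix.mul_smul, Matrix.trace_smul, smul_eq_mul, Complex.re_ofReal_mul]
    rw [htr, ← Finset.sum_neg_distrib]
    refine Finset.sum_le_sum fun k _ => ?_
    rw [← mul_neg]
    refine mul_le_mul_of_nonneg_left ?_ (hp k)
    obtain ⟨Q, hQ, hQ1, hQW⟩ := hcert (S k) (hS k) (hS' k)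
    have h1 := aux_trace_nonneg _ _ hQW (hσ k).1
    rw [Matrix.sub_mul, Matrix.trace_sub, Complex.sub_re, aux_pt_trace] at h1
    have h2 := aux_neg (ptS d (S k) (σ k)) Q (aux_pt_herm d (S k) _ (hσ k).1.1) hQ
      (by convert hQ1)
    refine le_trans (le_trans ?_ h2) (le_of_eq ?_)
    · linarith
    · congr
end

section
/- Twirling of a witness certificate: let W = Σ_{T⊆E} w_T P_T with real coefficients w_T, let K ⊆ E, and let Q be a positive semidefinite matrix on the total space with Q^{Γ_K} ⪯ W. Define Q̃ = (⊗_{e∉K} T_e ⊗ ⊗_{e∈K} T'_e)(Q), where T_e and T'_e denote the twirling maps T and T' acting on the two ℂ^d factors of edge e. Then Q̃ is positive semidefinite, Q̃^{Γ_K} ⪯ W, and Q̃^{Γ_K} = Σ_{T⊆E} q_T P_T for some real coefficients q_T; moreover, if Q ⪯ I then Q̃ ⪯ I. -/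
open Matrix Finset
open scoped ComplexOrder

/-- The projector onto the maximally entangled state on `ℂ^d ⊗ ℂ^d`. -/
noncomputable def phiM (d : ℕ) : Matrix (Fin d × Fin d) (Fin d × Fin d) ℂ :=
  Matrix.of fun p q => if p.1 = p.2 ∧ q.1 = q.2 then (1 : ℂ) / d else 0

/-- The swap operator on `ℂ^d ⊗ ℂ^d`. -/
def swapM (d : ℕ) : Matrix (Fin d × Fin d) (Fin d × Fin d) ℂ :=
  Matrix.of fun p q => if p.1 = q.2 ∧ p.2 = q.1 then (1 : ℂ) else 0

/-- The symmetric projector `P⁺ = (I + V)/2`. -/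
noncomputable def Pplus (d : ℕ) : Matrix (Fin d × Fin d) (Fin d × Fin d) ℂ :=
  (2⁻¹ : ℂ) • (1 + swapM d)

/-- The antisymmetric projector `P⁻ = (I − V)/2`. -/
noncomputable def Pminus (d : ℕ) : Matrix (Fin d × Fin d) (Fin d × Fin d) ℂ :=
  (2⁻¹ : ℂ) • (1 - swapM d)

/-- `P_T = ⊗_{e∈T} Φ_e ⊗ ⊗_{e∉T} (I_e − Φ_e)` on the total space of the network. -/
noncomputable def PT (d : ℕ) (E : Type*) [Fintype E] [DecidableEq E] (T : Finset E) :
    Matrix (E → Fin d × Fin d) (E → Fin d × Fin d) ℂ :=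
  Matrix.of fun x y =>
    ∏ e, if e ∈ T then phiM d (x e) (y e) else (1 - phiM d) (x e) (y e)

/-- `Γ_K`: partial transpose of the first `ℂ^d` factor of every edge in `K`. -/
def ptK (d : ℕ) (E : Type*) [DecidableEq E] (K : Finset E)
    (M : Matrix (E → Fin d × Fin d) (E → Fin d × Fin d) ℂ) :
    Matrix (E → Fin d × Fin d) (E → Fin d × Fin d) ℂ :=
  Matrix.of fun x y =>
    M (fun e => if e ∈ K then ((y e).1, (x e).2) else x e)
      (fun e => if e ∈ K then ((x e).1, (y e).2) else y e)

/-- Matrix-element kernel of the twirling map `T`. -/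
noncomputable def kerT (d : ℕ) (p q a b : Fin d × Fin d) : ℂ :=
  phiM d p q * phiM d a b + (1 - phiM d) p q * (1 - phiM d) a b / ((d : ℂ) ^ 2 - 1)

/-- Matrix-element kernel of the twirling map `T'`. -/
noncomputable def kerT' (d : ℕ) (p q a b : Fin d × Fin d) : ℂ :=
  2 * Pplus d p q * Pplus d a b / ((d : ℂ) * ((d : ℂ) + 1))
    + 2 * Pminus d p q * Pminus d a b / ((d : ℂ) * ((d : ℂ) - 1))

/-- `⊗_{e∉K} T_e ⊗ ⊗_{e∈K} T'_e` applied to a matrix on the total space. -/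
noncomputable def multiTwirl (d : ℕ) (E : Type*) [Fintype E] [DecidableEq E] (K : Finset E)
    (M : Matrix (E → Fin d × Fin d) (E → Fin d × Fin d) ℂ) :
    Matrix (E → Fin d × Fin d) (E → Fin d × Fin d) ℂ :=
  Matrix.of fun x y =>
    ∑ a : E → Fin d × Fin d, ∑ b : E → Fin d × Fin d,
      (∏ e, if e ∈ K then kerT' d (x e) (y e) (a e) (b e)
            else kerT d (x e) (y e) (a e) (b e)) * M b a

section helpers

variable {E n : Type*} [Fintype E] [DecidableEq E] [Fintype n] [DecidableEq n]

/-- Tensor product of a family of matrices. -/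
def tens (A : E → Matrix n n ℂ) : Matrix (E → n) (E → n) ℂ :=
  Matrix.of fun x y => ∏ e, A e (x e) (y e)

omit [DecidableEq n] in
lemma tens_mul (A B : E → Matrix n n ℂ) : tens A * tens B = tens (fun e => A e * B e) := by
  ext x y
  simp only [tens, Matrix.mul_apply, Matrix.of_apply, ← Finset.prod_mul_distrib]
  rw [Finset.prod_univ_sum, Fintype.piFinset_univ]

omit [DecidableEq n] in
lemma tens_trace (A : E → Matrix n n ℂ) : (tens A).trace = ∏ e, (A e).trace := by
  simp only [tens, Matrix.trace, Matrix.diag_apply, Matrix.of_apply]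
  rw [Finset.prod_univ_sum, Fintype.piFinset_univ]

omit [DecidableEq E] in
lemma tens_one : tens (fun _ : E => (1 : Matrix n n ℂ)) = 1 := by
  ext x y
  simp only [tens, Matrix.of_apply, Matrix.one_apply]
  by_cases h : x = y
  · simp [h]
  · obtain ⟨e, he⟩ := Function.ne_iff.mp h
    rw [if_neg h]
    exact Finset.prod_eq_zero (Finset.mem_univ e) (if_neg he)

omit [DecidableEq E] [Fintype n] [DecidableEq n] in
lemma tens_conj (A : E → Matrix n n ℂ) : (tens A)ᴴ = tens (fun e => (A e)ᴴ) := by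
  ext x y
  simp [tens, Matrix.conjTranspose_apply]

omit [DecidableEq n] in
lemma tens_psd (A : E → Matrix n n ℂ) (h1 : ∀ e, (A e)ᴴ = A e) (h2 : ∀ e, A e * A e = A e) :
    (tens A).PosSemidef := by
  have : tens A = (tens A)ᴴ * tens A := by
    rw [tens_conj, tens_mul]; simp only [h1, h2]
  rw [this]
  exact Matrix.posSemidef_conjTranspose_mul_self _

/-- Family of projectors selected by a subset. -/
def sel (F G : E → Matrix n n ℂ) (S : Finset E) : Matrix (E → n) (E → n) ℂ :=
  tens (fun e => if e ∈ S then F e else G e)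

/-- Weight selected by a subset. -/
def selw (a b : E → ℝ) (S : Finset E) : ℝ := ∏ e, if e ∈ S then a e else b e

omit [Fintype n] [DecidableEq n] [Fintype E] [DecidableEq E] in
lemma prod_expand [Fintype E] [DecidableEq E] (f g : E → ℂ) :
    ∏ e, (f e + g e) = ∑ S : Finset E, ∏ e, if e ∈ S then f e else g e := by
  rw [Fintype.prod_add]
  refine Finset.sum_congr rfl fun S _ => ?_
  rw [← Finset.prod_mul_prod_compl S]
  congr 1
  · exact Finset.prod_congr rfl fun e he => by simp [he]
  · exact Finset.prod_congr rfl fun e he => by simp [Finset.mem_compl.mp he]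

/-- Abstract twirl. -/
def atw (F G : E → Matrix n n ℂ) (a b : E → ℝ) (M : Matrix (E → n) (E → n) ℂ) :
    Matrix (E → n) (E → n) ℂ :=
  ∑ S : Finset E, ((selw a b S : ℂ) * (sel F G S * M).trace) • sel F G S

/-- Hypotheses on the per-edge projectors. -/
structure Good (F G : E → Matrix n n ℂ) (a b : E → ℝ) : Prop where
  F1 : ∀ e, (F e)ᴴ = F e
  G1 : ∀ e, (G e)ᴴ = G e
  F2 : ∀ e, F e * F e = F e
  FG : ∀ e, F e + G e = 1
  a0 : ∀ e, 0 ≤ a e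
  b0 : ∀ e, 0 ≤ b e
  ta : ∀ e, (a e : ℂ) * (F e).trace = 1
  tb : ∀ e, (b e : ℂ) * (G e).trace = 1

variable {F G : E → Matrix n n ℂ} {a b : E → ℝ}

omit [DecidableEq E] [Fintype E] in
lemma Good.G2 (h : Good F G a b) (e : E) : G e * G e = G e := by
  have := h.F2 e
  rw [eq_sub_of_add_eq' (h.FG e)]
  simp [sub_mul, mul_sub, this]

omit [DecidableEq E] [Fintype E] in
lemma Good.FG0 (h : Good F G a b) (e : E) : F e * G e = 0 := by
  have := h.F2 e
  rw [eq_sub_of_add_eq' (h.FG e)]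
  simp [mul_sub, this]

omit [DecidableEq E] [Fintype E] in
lemma Good.GF0 (h : Good F G a b) (e : E) : G e * F e = 0 := by
  have := h.F2 e
  rw [eq_sub_of_add_eq' (h.FG e)]
  simp [sub_mul, this]

lemma Good.sel_psd (h : Good F G a b) (S : Finset E) : (sel F G S).PosSemidef := by
  apply tens_psd
  · intro e; split_ifs
    · exact h.F1 e
    · exact h.G1 e
  · intro e; split_ifs
    · exact h.F2 e
    · exact h.G2 e

lemma Good.sel_idem (h : Good F G a b) (S : Finset E) : sel F G S * sel F G S = sel F G S := by
  rw [sel, tens_mul]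
  congr 1
  funext e; split_ifs
  · exact h.F2 e
  · exact h.G2 e

lemma Good.sel_orth (h : Good F G a b) {S T : Finset E} (hST : S ≠ T) :
    sel F G S * sel F G T = 0 := by
  rw [sel, sel, tens_mul]
  have : ∃ e, ¬ (e ∈ S ↔ e ∈ T) := by
    by_contra hc
    push Not at hc
    exact hST (Finset.ext hc)
  obtain ⟨e, he⟩ := this
  ext x y
  simp only [tens, Matrix.of_apply, Matrix.zero_apply]
  apply Finset.prod_eq_zero (Finset.mem_univ e)
  by_cases h1 : e ∈ S <;> by_cases h2 : e ∈ T <;> simp_all [h.FG0 e, h.GF0 e]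

lemma Good.sel_tr (h : Good F G a b) (S : Finset E) :
    (selw a b S : ℂ) * (sel F G S).trace = 1 := by
  rw [sel, tens_trace, selw, Complex.ofReal_prod, ← Finset.prod_mul_distrib]
  apply Finset.prod_eq_one
  intro e _
  split_ifs
  · exact h.ta e
  · exact h.tb e

lemma Good.selw_nonneg (h : Good F G a b) (S : Finset E) : 0 ≤ selw a b S := by
  apply Finset.prod_nonneg
  intro e _
  split_ifs
  · exact h.a0 e
  · exact h.b0 e

lemma Good.sum_sel (h : Good F G a b) : ∑ S : Finset E, sel F G S = 1 := by
  rw [← tens_one]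
  ext x y
  rw [Matrix.sum_apply]
  have h1 : tens (fun _ : E => (1 : Matrix n n ℂ)) x y
      = ∏ e, (F e (x e) (y e) + G e (x e) (y e)) := by
    refine Finset.prod_congr rfl fun e _ => ?_
    rw [← h.FG e]; rfl
  rw [h1, prod_expand]
  refine Finset.sum_congr rfl fun S _ => ?_
  simp only [sel, tens, Matrix.of_apply]
  refine Finset.prod_congr rfl fun e _ => ?_
  split_ifs <;> rfl

lemma Good.atw_one (h : Good F G a b) : atw F G a b 1 = 1 := by
  simp only [atw, mul_one, h.sel_tr, one_smul, h.sum_sel]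

lemma atw_sub (M N : Matrix (E → n) (E → n) ℂ) :
    atw F G a b (M - N) = atw F G a b M - atw F G a b N := by
  simp only [atw, mul_sub, Matrix.trace_sub, sub_smul, Finset.sum_sub_distrib]

lemma Good.tr_nonneg (h : Good F G a b) {M : Matrix (E → n) (E → n) ℂ} (hM : M.PosSemidef)
    (S : Finset E) : 0 ≤ (sel F G S * M).trace := by
  have h1 : (sel F G S * M).trace = (sel F G S * M * (sel F G S)ᴴ).trace := by
    rw [(h.sel_psd S).1.eq, Matrix.trace_mul_comm (sel F G S * M), ← mul_assoc, h.sel_idem]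
  rw [h1]
  exact (hM.mul_mul_conjTranspose_same _).trace_nonneg

lemma Good.exists_coef (h : Good F G a b) {M : Matrix (E → n) (E → n) ℂ} (hM : M.PosSemidef) :
    ∃ q : Finset E → ℝ, (∀ S, 0 ≤ q S) ∧
      atw F G a b M = ∑ S : Finset E, (q S : ℂ) • sel F G S := by
  have key : ∀ S : Finset E, ∃ r : ℝ, 0 ≤ r ∧
      (r : ℂ) = (selw a b S : ℂ) * (sel F G S * M).trace := by
    intro S
    have h1 := h.tr_nonneg hM S
    obtain ⟨hre, him⟩ := Complex.nonneg_iff.mp h1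
    refine ⟨selw a b S * (sel F G S * M).trace.re, mul_nonneg (h.selw_nonneg S) hre, ?_⟩
    apply Complex.ext <;> simp [← him]
  choose q h0 hq using key
  exact ⟨q, h0, by simp only [atw, hq]⟩

lemma Good.sum_psd (h : Good F G a b) (q : Finset E → ℝ) (hq : ∀ S, 0 ≤ q S) :
    (∑ S : Finset E, (q S : ℂ) • sel F G S).PosSemidef := by
  apply Matrix.posSemidef_sum
  intro S _
  exact (h.sel_psd S).smul (by exact_mod_cast hq S)

lemma Good.atw_psd (h : Good F G a b) {M : Matrix (E → n) (E → n) ℂ} (hM : M.PosSemidef) :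
    (atw F G a b M).PosSemidef := by
  obtain ⟨q, h0, hq⟩ := h.exists_coef hM
  rw [hq]
  exact h.sum_psd q h0

lemma Good.atw_W (h : Good F G a b) (w : Finset E → ℝ) :
    atw F G a b (∑ T : Finset E, (w T : ℂ) • sel F G T) =
      ∑ T : Finset E, (w T : ℂ) • sel F G T := by
  rw [atw]
  refine Finset.sum_congr rfl fun S _ => ?_
  congr 1
  rw [Finset.mul_sum, Finset.sum_eq_single S]
  · rw [Matrix.mul_smul, h.sel_idem, Matrix.trace_smul, smul_eq_mul, mul_left_comm, h.sel_tr,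
      mul_one]
  · intro T _ hT
    rw [Matrix.mul_smul, h.sel_orth hT.symm, smul_zero]
  · simp

lemma atw_apply (M : Matrix (E → n) (E → n) ℂ) (x y : E → n) :
    atw F G a b M x y = ∑ u : E → n, ∑ v : E → n,
      (∏ e, ((a e : ℂ) * (F e (x e) (y e) * F e (u e) (v e))
        + (b e : ℂ) * (G e (x e) (y e) * G e (u e) (v e)))) * M v u := by
  simp only [prod_expand, atw, Matrix.sum_apply, Matrix.smul_apply, Matrix.trace, Matrix.diag_apply,
    Matrix.mul_apply, smul_eq_mul, Finset.sum_mul, Finset.mul_sum]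
  rw [Finset.sum_comm]
  refine Finset.sum_congr rfl fun u _ => ?_
  rw [Finset.sum_comm]
  refine Finset.sum_congr rfl fun v _ => ?_
  refine Finset.sum_congr rfl fun S _ => ?_
  have : (∏ e, if e ∈ S then (a e : ℂ) * (F e (x e) (y e) * F e (u e) (v e))
      else (b e : ℂ) * (G e (x e) (y e) * G e (u e) (v e)))
      = (selw a b S : ℂ) * (sel F G S x y * sel F G S u v) := by
    simp only [selw, sel, tens, Matrix.of_apply, Complex.ofReal_prod, ← Finset.prod_mul_distrib]
    refine Finset.prod_congr rfl fun e _ => ?_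
    split_ifs <;> rfl
  rw [this]
  ring

end helpers

section concrete

lemma phi_conj (d : ℕ) : (phiM d)ᴴ = phiM d := by
  ext p q
  simp only [phiM, Matrix.conjTranspose_apply, Matrix.of_apply, and_comm]
  split_ifs <;> simp

lemma phi_idem (d : ℕ) (hd : 2 ≤ d) : phiM d * phiM d = phiM d := by
  have hd' : (d : ℂ) ≠ 0 := by norm_cast; omega
  ext p q
  simp only [phiM, Matrix.mul_apply, Matrix.of_apply, Fintype.sum_prod_type]
  by_cases h1 : p.1 = p.2 <;> by_cases h2 : q.1 = q.2 <;> simp [h1, h2]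
  field_simp

lemma phi_tr (d : ℕ) (hd : 2 ≤ d) : (phiM d).trace = 1 := by
  have hd' : (d : ℂ) ≠ 0 := by norm_cast; omega
  simp [phiM, Matrix.trace, Fintype.sum_prod_type, hd']

lemma swap_conj (d : ℕ) : (swapM d)ᴴ = swapM d := by
  ext p q
  simp only [swapM, Matrix.conjTranspose_apply, Matrix.of_apply]
  by_cases h1 : p.1 = q.2 <;> by_cases h2 : p.2 = q.1 <;> simp [h1, h2, eq_comm]
  exact fun h => h2 h.symm

lemma swap_sq (d : ℕ) : swapM d * swapM d = 1 := by
  ext ⟨p1, p2⟩ ⟨q1, q2⟩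
  simp only [swapM, Matrix.mul_apply, Matrix.of_apply, Matrix.one_apply, Prod.mk.injEq]
  rw [Finset.sum_eq_single (p2, p1)]
  · simp [and_comm]
  · rintro ⟨r1, r2⟩ _ hr
    have : ¬ (p1 = r2 ∧ p2 = r1) := by rintro ⟨rfl, rfl⟩; exact hr rfl
    simp [this]
  · simp

lemma swap_tr (d : ℕ) : (swapM d).trace = d := by
  simp only [swapM, Matrix.trace, Matrix.diag_apply, Matrix.of_apply, Fintype.sum_prod_type]
  have : ∀ x y : Fin d, (x = y ∧ y = x) ↔ x = y := fun x y => ⟨fun h => h.1, fun h => ⟨h, h.symm⟩⟩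
  simp [this]

variable (d : ℕ) {E : Type*} [Fintype E] [DecidableEq E] (K : Finset E)

/-- First projector. -/
noncomputable def FK (e : E) : Matrix (Fin d × Fin d) (Fin d × Fin d) ℂ :=
  if e ∈ K then Pplus d else phiM d
/-- Second projector. -/
noncomputable def GK (e : E) : Matrix (Fin d × Fin d) (Fin d × Fin d) ℂ :=
  if e ∈ K then Pminus d else 1 - phiM d
/-- First weight. -/
noncomputable def aK (e : E) : ℝ := if e ∈ K then 2 / ((d : ℝ) * (d + 1)) else 1
/-- Second weight. -/
noncomputable def bK (e : E) : ℝ := if e ∈ K then 2 / ((d : ℝ) * (d - 1)) else 1 / ((d : ℝ) ^ 2 - 1)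

omit [Fintype E] in
lemma goodK (hd : 2 ≤ d) : Good (FK d K) (GK d K) (aK d K) (bK d K) := by
  have hr : (2 : ℝ) ≤ d := by exact_mod_cast hd
  have h0 : (d : ℂ) ≠ 0 := by norm_cast; omega
  have h1 : (d : ℂ) + 1 ≠ 0 := by norm_cast
  have h2 : (d : ℂ) - 1 ≠ 0 := by
    rw [sub_ne_zero]; norm_cast; omega
  have h3 : (d : ℂ) ^ 2 - 1 ≠ 0 := by
    have : (d : ℂ) ^ 2 - 1 = (d - 1) * (d + 1) := by ring
    rw [this]; exact mul_ne_zero h2 h1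
  constructor <;> intro e
  · unfold FK; split_ifs
    · simp [Pplus, swap_conj]
    · exact phi_conj d
  · unfold GK; split_ifs
    · simp [Pminus, swap_conj]
    · simp [phi_conj d]
  · unfold FK; split_ifs
    · simp only [Pplus, Matrix.smul_mul, Matrix.mul_smul, add_mul, mul_add, swap_sq, one_mul,
        mul_one]
      module
    · exact phi_idem d hd
  · unfold FK GK; split_ifs
    · simp only [Pplus, Pminus]; module
    · simp
  · unfold aK; split_ifs <;> positivity
  · unfold bK; split_ifs
    · have : (0 : ℝ) ≤ d - 1 := by linarith
      positivity
    · have : (0 : ℝ) ≤ (d : ℝ) ^ 2 - 1 := by nlinarith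
      positivity
  · unfold aK FK; split_ifs
    · simp only [Pplus, Matrix.trace_smul, Matrix.trace_add, swap_tr, Matrix.trace_one,
        Fintype.card_prod, Fintype.card_fin, smul_eq_mul]
      push_cast
      field_simp
    · simp [phi_tr d hd]
  · unfold bK GK; split_ifs
    · simp only [Pminus, Matrix.trace_smul, Matrix.trace_sub, swap_tr, Matrix.trace_one,
        Fintype.card_prod, Fintype.card_fin, smul_eq_mul]
      push_cast
      field_simp
    · simp only [Matrix.trace_sub, phi_tr d hd, Matrix.trace_one,
        Fintype.card_prod, Fintype.card_fin]
      push_cast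
      field_simp

lemma multiTwirl_eq (M : Matrix (E → Fin d × Fin d) (E → Fin d × Fin d) ℂ) :
    multiTwirl d E K M = atw (FK d K) (GK d K) (aK d K) (bK d K) M := by
  ext x y
  rw [atw_apply]
  simp only [multiTwirl, Matrix.of_apply]
  refine Finset.sum_congr rfl fun u _ => Finset.sum_congr rfl fun v _ => ?_
  congr 1
  refine Finset.prod_congr rfl fun e _ => ?_
  unfold FK GK aK bK
  split_ifs
  · simp only [kerT']; push_cast; ring
  · simp only [kerT]; push_cast; ring

lemma PT_eq (T : Finset E) : PT d E T = sel (FK d (∅ : Finset E)) (GK d ∅) T := by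
  ext x y
  simp only [PT, sel, tens, Matrix.of_apply, FK, GK, Finset.notMem_empty, if_false]
  refine Finset.prod_congr rfl fun e _ => ?_
  split_ifs <;> rfl

lemma ker_eq (hd : 2 ≤ d) (p q a b : Fin d × Fin d) :
    kerT' d (q.1, p.2) (p.1, q.2) (b.1, a.2) (a.1, b.2) = kerT d p q a b := by
  have h0 : (d : ℂ) ≠ 0 := by norm_cast; omega
  have h1 : (d : ℂ) + 1 ≠ 0 := by norm_cast
  have h2 : (d : ℂ) - 1 ≠ 0 := by
    rw [sub_ne_zero]; norm_cast; omega
  have h3 : (d : ℂ) ^ 2 - 1 = (d - 1) * (d + 1) := by ring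
  have hs : ∀ p q : Fin d × Fin d, swapM d (q.1, p.2) (p.1, q.2) = d * phiM d p q := by
    intro p q
    simp only [swapM, phiM, Matrix.of_apply]
    by_cases h : q.1 = q.2 <;> by_cases h' : p.1 = p.2 <;> simp [h, h', h0, eq_comm]
  have ho : ∀ p q : Fin d × Fin d,
      (1 : Matrix (Fin d × Fin d) (Fin d × Fin d) ℂ) (q.1, p.2) (p.1, q.2)
      = (1 : Matrix (Fin d × Fin d) (Fin d × Fin d) ℂ) p q := by
    rintro ⟨p1, p2⟩ ⟨q1, q2⟩
    simp only [Matrix.one_apply, Prod.mk.injEq]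
    simp [eq_comm]
  simp only [kerT', kerT, Pplus, Pminus, Matrix.smul_apply, Matrix.add_apply, Matrix.sub_apply,
    hs, ho, smul_eq_mul, h3]
  field_simp
  ring

lemma ptK_twirl (hd : 2 ≤ d) (M : Matrix (E → Fin d × Fin d) (E → Fin d × Fin d) ℂ) :
    ptK d E K (multiTwirl d E K M) = multiTwirl d E ∅ (ptK d E K M) := by
  ext x y
  simp only [ptK, multiTwirl, Matrix.of_apply, Finset.notMem_empty, if_false]
  rw [← Fintype.sum_prod_type', ← Fintype.sum_prod_type']
  let f : (E → Fin d × Fin d) × (E → Fin d × Fin d) → (E → Fin d × Fin d) × (E → Fin d × Fin d) :=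
    fun z => (fun e => if e ∈ K then ((z.2 e).1, (z.1 e).2) else z.1 e,
      fun e => if e ∈ K then ((z.1 e).1, (z.2 e).2) else z.2 e)
  have hf : Function.Involutive f := by
    rintro ⟨u, v⟩
    simp only [f, Prod.mk.injEq]
    constructor <;> funext e <;> by_cases h : e ∈ K <;> simp [h]
  rw [← Equiv.sum_comp hf.toPerm]
  refine Finset.sum_congr rfl fun z _ => ?_
  simp only [Function.Involutive.coe_toPerm, f]
  congr 1
  refine Finset.prod_congr rfl fun e _ => ?_
  by_cases h : e ∈ K
  · simp only [h, if_true]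
    exact ker_eq d hd _ _ _ _
  · simp only [h, if_false]

end concrete

/-- Twirling of a witness certificate: if `W = Σ_T w_T P_T`, `Q ⪰ 0` and
`Q^{Γ_K} ⪯ W`, then `Q̃ = (⊗_{e∉K} T_e ⊗ ⊗_{e∈K} T'_e)(Q)` satisfies `Q̃ ⪰ 0`,
`Q̃^{Γ_K} ⪯ W`, `Q̃^{Γ_K} = Σ_T q_T P_T` for some real `q_T`; and `Q ⪯ I → Q̃ ⪯ I`. -/
theorem stmt_6 (d : ℕ) (hd : 2 ≤ d) (E : Type*) [Fintype E] [DecidableEq E] [Nonempty E]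
    (w : Finset E → ℝ) (K : Finset E)
    (Q : Matrix (E → Fin d × Fin d) (E → Fin d × Fin d) ℂ)
    (hQ : Q.PosSemidef)
    (hQW : ((∑ T : Finset E, (w T : ℂ) • PT d E T) - ptK d E K Q).PosSemidef) :
    (multiTwirl d E K Q).PosSemidef ∧
    ((∑ T : Finset E, (w T : ℂ) • PT d E T) - ptK d E K (multiTwirl d E K Q)).PosSemidef ∧
    (∃ q : Finset E → ℝ,
      ptK d E K (multiTwirl d E K Q) = ∑ T : Finset E, (q T : ℂ) • PT d E T) ∧
    ((1 - Q).PosSemidef → (1 - multiTwirl d E K Q).PosSemidef) := by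
  have gK := goodK d K hd
  have g0 := goodK d (∅ : Finset E) hd
  rw [ptK_twirl d K hd]
  simp only [PT_eq, multiTwirl_eq] at hQW ⊢
  obtain ⟨q, hq0, hq⟩ := g0.exists_coef hQW
  rw [atw_sub, g0.atw_W] at hq
  refine ⟨gK.atw_psd hQ, ?_, ⟨fun T => w T - q T, ?_⟩, fun h => ?_⟩
  · rw [hq]
    exact g0.sum_psd q hq0
  · simp only [Complex.ofReal_sub, sub_smul, Finset.sum_sub_distrib]
    rw [← hq, sub_sub_cancel]
  · rw [← gK.atw_one, ← atw_sub]
    exact gK.atw_psd h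
end

section
/- Linear-program characterization of sub-symmetric witnesses: let G = (V, E) be a finite connected simple graph with at least two vertices, d ≥ 2 an integer, and W = Σ_{T⊆E} w_T P_T with real coefficients w_T. Then the following are equivalent. (i) For every nonempty proper subset S ⊂ V there exists a positive semidefinite matrix Q_S on the total space with Q_S^{Γ_{∂S}} ⪯ W. (ii) For every nonempty proper subset S ⊂ V there exist real numbers q_T(S) with q_T(S) ≤ w_T for all T ⊆ E, such that for every T̃ ⊆ E ∖ ∂S and every function s : ∂S → {0,1}, Σ_{T ⊆ ∂S} q_{T∪T̃}(S) · ∏_{e∈T} (−1)^{s(e)} · ∏_{e∈∂S∖T} ((d−1) if s(e)=0 else (d+1)) ≥ 0. -/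
open Matrix Finset
open scoped ComplexOrder

/-- The edge boundary `∂S` of a vertex subset `S`, as a finite set of edges of `G`
(the edges with exactly one endpoint in `S`). -/
def bdE {V : Type*} [Fintype V] [DecidableEq V] (G : SimpleGraph V) [DecidableRel G.Adj]
    (S : Finset V) : Finset ↥G.edgeSet :=
  Finset.univ.filter (fun e => (S.filter (fun v => v ∈ e.val)).card = 1)

section aux
variable {d : ℕ} {E : Type*} [Fintype E] [DecidableEq E]

noncomputable def tpM (A : E → Matrix (Fin d × Fin d) (Fin d × Fin d) ℂ) :
    Matrix (E → Fin d × Fin d) (E → Fin d × Fin d) ℂ :=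
  Matrix.of fun x y => ∏ e, A e (x e) (y e)

def gamM (A : Matrix (Fin d × Fin d) (Fin d × Fin d) ℂ) :
    Matrix (Fin d × Fin d) (Fin d × Fin d) ℂ :=
  Matrix.of fun x y => A (y.1, x.2) (x.1, y.2)

def swM (d : ℕ) : Matrix (Fin d × Fin d) (Fin d × Fin d) ℂ :=
  Matrix.of fun x y => if x.1 = y.2 ∧ x.2 = y.1 then 1 else 0

lemma tpM_mul (A B : E → Matrix (Fin d × Fin d) (Fin d × Fin d) ℂ) :
    tpM A * tpM B = tpM (fun e => A e * B e) := by
  ext x y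
  simp only [tpM, Matrix.mul_apply, Matrix.of_apply, ← Finset.prod_mul_distrib]
  rw [Finset.prod_univ_sum, Fintype.piFinset_univ]

lemma tpM_trace (A : E → Matrix (Fin d × Fin d) (Fin d × Fin d) ℂ) :
    (tpM A).trace = ∏ e, (A e).trace := by
  simp only [tpM, Matrix.trace, Matrix.diag, Matrix.of_apply]
  rw [Finset.prod_univ_sum, Fintype.piFinset_univ]

lemma tpM_conj (A : E → Matrix (Fin d × Fin d) (Fin d × Fin d) ℂ) :
    (tpM A)ᴴ = tpM (fun e => (A e)ᴴ) := by
  ext x y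
  simp [tpM, Matrix.conjTranspose_apply]

lemma psd_factor {n : Type*} [Fintype n] [DecidableEq n] {A : Matrix n n ℂ} (h : A.PosSemidef) :
    ∃ B : Matrix n n ℂ, A = Bᴴ * B := by
  open scoped MatrixOrder in
  exact CStarAlgebra.nonneg_iff_eq_star_mul_self.mp h.nonneg

lemma tpM_psd (A : E → Matrix (Fin d × Fin d) (Fin d × Fin d) ℂ)
    (h : ∀ e, (A e).PosSemidef) : (tpM A).PosSemidef := by
  choose B hB using fun e => psd_factor (h e)
  have : tpM A = (tpM B)ᴴ * tpM B := by
    rw [tpM_conj, tpM_mul]; congr 1; funext e; exact hB e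
  rw [this]
  exact Matrix.posSemidef_conjTranspose_mul_self _

lemma trace_mul_psd {n : Type*} [Fintype n] [DecidableEq n] {A B : Matrix n n ℂ}
    (hA : A.PosSemidef) (hB : B.PosSemidef) : 0 ≤ (A * B).trace := by
  obtain ⟨C, rfl⟩ := psd_factor hA
  rw [Matrix.mul_assoc, Matrix.trace_mul_comm]
  exact (hB.mul_mul_conjTranspose_same C).trace_nonneg

lemma proj_psd {n : Type*} [Fintype n] [DecidableEq n] {A : Matrix n n ℂ}
    (h1 : Aᴴ = A) (h2 : A * A = A) : A.PosSemidef := by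
  have : A = Aᴴ * A := by rw [h1, h2]
  rw [this]
  exact Matrix.posSemidef_conjTranspose_mul_self _

lemma phi_herm : (phiM d)ᴴ = phiM d := by
  ext x y
  simp only [phiM, Matrix.conjTranspose_apply, Matrix.of_apply]
  split_ifs <;> simp_all

lemma phi_sq (hd : 2 ≤ d) : phiM d * phiM d = phiM d := by
  have : (d : ℂ) ≠ 0 := by norm_cast; omega
  ext x y
  simp only [phiM, Matrix.mul_apply, Matrix.of_apply, Fintype.sum_prod_type]
  by_cases hx : x.1 = x.2 <;> by_cases hy : y.1 = y.2 <;> simp [hx, hy, this]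

lemma phi_trace (hd : 2 ≤ d) : (phiM d).trace = 1 := by
  have : (d : ℂ) ≠ 0 := by norm_cast; omega
  simp [phiM, Matrix.trace, Fintype.sum_prod_type, this]

lemma phi_psd (hd : 2 ≤ d) : (phiM d).PosSemidef := proj_psd phi_herm (phi_sq hd)

lemma phic_psd (hd : 2 ≤ d) : (1 - phiM d).PosSemidef := by
  apply proj_psd
  · simp [phi_herm]
  · simp [Matrix.mul_sub, Matrix.sub_mul, phi_sq hd]

lemma phic_trace (hd : 2 ≤ d) : (1 - phiM d).trace = (d : ℂ) ^ 2 - 1 := by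
  rw [Matrix.trace_sub, phi_trace hd]; simp [sq]

lemma sw_herm : (swM d)ᴴ = swM d := by
  ext x y
  simp only [swM, Matrix.conjTranspose_apply, Matrix.of_apply]
  split_ifs <;> simp_all

lemma sw_sq : swM d * swM d = 1 := by
  ext ⟨a, b⟩ ⟨c, e⟩
  simp only [swM, Matrix.mul_apply, Matrix.of_apply, Fintype.sum_prod_type, Matrix.one_apply]
  rw [Finset.sum_eq_single b, Finset.sum_eq_single a]
  · simp [Prod.ext_iff, and_comm]
  all_goals simp +contextual [eq_comm]

lemma gam_phi : gamM (phiM d) = ((1 : ℂ) / d) • swM d := by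
  ext x y
  simp only [gamM, phiM, swM, Matrix.of_apply, Matrix.smul_apply]
  split_ifs <;> simp_all

lemma gam_one : gamM (1 : Matrix (Fin d × Fin d) (Fin d × Fin d) ℂ) = 1 := by
  ext x y
  simp only [gamM, Matrix.one_apply, Matrix.of_apply, Prod.ext_iff]
  congr 1
  rw [eq_comm (a := y.1)]

/-- sign -/
def sgB (b : Bool) : ℂ := if b then -1 else 1

lemma sw_psd (b : Bool) : (1 + sgB b • swM d).PosSemidef := by
  have h : (1 + sgB b • swM d) = (2 : ℂ) • ((1 / 2 : ℂ) • (1 + sgB b • swM d)) := by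
    rw [smul_smul]; norm_num
  rw [h]
  have h2 : ((1 / 2 : ℂ) • (1 + sgB b • swM d)).PosSemidef := by
    apply proj_psd
    · cases b <;> simp [sgB, sw_herm, Matrix.conjTranspose_add, Matrix.conjTranspose_smul]
    · cases b <;> simp [sgB, Matrix.mul_add, Matrix.add_mul, sw_sq] <;> module
  exact h2.smul (by norm_num)

noncomputable def phB (d : ℕ) (t : Bool) : Matrix (Fin d × Fin d) (Fin d × Fin d) ℂ := 
  if t then phiM d else 1 - phiM d

lemma PT_eq_s7 (T : Finset E) : PT d E T = tpM (fun e => phB d (decide (e ∈ T))) := by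
  ext x y
  simp only [PT, tpM, phB, Matrix.of_apply, decide_eq_true_eq]
  refine Finset.prod_congr rfl fun e _ => ?_
  split_ifs <;> rfl

lemma ptK_tp (K : Finset E) (A : E → Matrix (Fin d × Fin d) (Fin d × Fin d) ℂ) :
    ptK d E K (tpM A) = tpM (fun e => if e ∈ K then gamM (A e) else A e) := by
  ext x y
  simp only [ptK, tpM, gamM, Matrix.of_apply]
  refine Finset.prod_congr rfl fun e _ => ?_
  split_ifs <;> rfl


lemma ptK_invol (K : Finset E) (M : Matrix (E → Fin d × Fin d) (E → Fin d × Fin d) ℂ) :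
    ptK d E K (ptK d E K M) = M := by
  ext x y
  simp only [ptK, Matrix.of_apply]
  congr 1 <;> funext e <;> split_ifs <;> rfl

lemma ptK_trace (K : Finset E) (M N : Matrix (E → Fin d × Fin d) (E → Fin d × Fin d) ℂ) :
    (ptK d E K M * N).trace = (M * ptK d E K N).trace := by
  simp only [Matrix.trace, Matrix.diag, Matrix.mul_apply, ← Fintype.sum_prod_type']
  let f : (E → Fin d × Fin d) × (E → Fin d × Fin d) → (E → Fin d × Fin d) × (E → Fin d × Fin d) :=
    fun p => (fun e => if e ∈ K then ((p.2 e).1, (p.1 e).2) else p.1 e,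
      fun e => if e ∈ K then ((p.1 e).1, (p.2 e).2) else p.2 e)
  have hf : Function.Involutive f := by
    intro p
    simp only [f]
    ext1 <;> funext e <;> simp only [] <;> split_ifs <;> rfl
  refine Fintype.sum_equiv hf.toPerm _ _ fun p => ?_
  simp only [ptK, Matrix.of_apply, Function.Involutive.coe_toPerm, f]
  congr 2
  all_goals (funext e; split_ifs <;> rfl)

/-- coefficients; `k`: e ∈ K, `t` : e ∈ T, `s`: s e -/
def mB (d : ℕ) (k : Prop) [Decidable k] (t s : Bool) : ℝ :=
  if k then (if t then (if s then -1 else 1) else (if s then (d : ℝ) + 1 else (d : ℝ) - 1))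
  else (if t = s then 1 else 0)

lemma tpM_smul (c : E → ℂ) (A : E → Matrix (Fin d × Fin d) (Fin d × Fin d) ℂ) :
    tpM (fun e => c e • A e) = (∏ e, c e) • tpM A := by
  ext x y
  simp [tpM, Finset.prod_mul_distrib]

lemma tpM_sum (A : E → Bool → Matrix (Fin d × Fin d) (Fin d × Fin d) ℂ) :
    tpM (fun e => ∑ b, A e b) = ∑ s : E → Bool, tpM (fun e => A e (s e)) := by
  ext x y
  simp only [tpM, Matrix.of_apply, Matrix.sum_apply]
  rw [Finset.prod_univ_sum, Fintype.piFinset_univ]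

lemma tpM_sum' (A : E → Bool → Matrix (Fin d × Fin d) (Fin d × Fin d) ℂ) :
    tpM (fun e => ∑ b, A e b) = ∑ T : Finset E, tpM (fun e => A e (decide (e ∈ T))) := by
  rw [tpM_sum]
  symm
  refine Fintype.sum_bijective (fun (T : Finset E) (e : E) => decide (e ∈ T)) ?_ _ _ fun T => rfl
  constructor
  · intro T T' h
    ext e
    simpa using congrFun h e
  · intro s
    exact ⟨Finset.univ.filter (fun e => s e = true), by funext e; simp⟩

lemma sum_conv (K Ttil : Finset E) (hT : Ttil ⊆ Kᶜ) (q : Finset E → ℝ) (s : E → Bool)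
    (s' : E → Bool) (hs : ∀ e, s' e = if e ∈ K then s e else decide (e ∈ Ttil)) :
    ∑ T ∈ K.powerset, q (T ∪ Ttil) * ((∏ e ∈ T, (if s e then (-1 : ℝ) else 1)) *
              ∏ e ∈ K \ T, (if s e then ((d : ℝ) + 1) else ((d : ℝ) - 1)))
    = ∑ T : Finset E, q T * ∏ e, mB d (e ∈ K) (decide (e ∈ T)) (s' e) := by
  have hdj : ∀ e ∈ Ttil, e ∉ K := fun e he => by simpa using hT he
  refine Finset.sum_of_injOn (fun T => T ∪ Ttil) ?_ ?_ ?_ ?_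
  · intro T hT T' hT' h
    simp only [Finset.coe_powerset, Set.mem_preimage, Set.mem_powerset_iff, Finset.coe_subset] at hT hT'
    ext e
    have h1 := congrArg (fun s => e ∈ s) h
    simp only [Finset.mem_union, eq_iff_iff] at h1
    have := hdj e
    have := @hT e
    have := @hT' e
    tauto
  · simp
  · intro T _ hT
    have : ∃ e, e ∉ K ∧ ¬ (e ∈ T ↔ e ∈ Ttil) := by
      by_contra! hc
      apply hT
      refine ⟨T ∩ K, by simp, ?_⟩
      ext e
      have := hc e
      have := hdj e
      simp only [Finset.mem_union, Finset.mem_inter]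
      tauto
    obtain ⟨e, he, h⟩ := this
    rw [Finset.prod_eq_zero (Finset.mem_univ e), mul_zero]
    simp [mB, hs, he, h]
  · intro T hT
    rw [Finset.mem_powerset] at hT
    congr 1
    have hsplit : (Finset.univ : Finset E) = K ∪ Kᶜ := by simp
    rw [← Finset.prod_mul_prod_compl K, ← Finset.prod_sdiff hT]
    have h1 : ∏ e ∈ Kᶜ, mB d (e ∈ K) (decide (e ∈ T ∪ Ttil)) (s' e) = 1 := by
      refine Finset.prod_eq_one fun e he => ?_
      have he : e ∉ K := by simpa using he
      have : e ∉ T := fun h => he (hT h)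
      simp [mB, hs, he, this]
    rw [h1, mul_one, mul_comm]
    congr 1
    · refine Finset.prod_congr rfl fun e he => ?_
      simp only [Finset.mem_sdiff] at he
      have := hdj e
      have h3 : e ∉ Ttil := by tauto
      simp [mB, hs, he, h3]
    · refine Finset.prod_congr rfl fun e he => ?_
      simp [mB, hs, he, hT he]

lemma sum_smul_psd {ι n : Type*} [Fintype n] [DecidableEq n] (S : Finset ι) (c : ι → ℝ)
    (A : ι → Matrix n n ℂ) (hc : ∀ i ∈ S, 0 ≤ c i) (hA : ∀ i ∈ S, (A i).PosSemidef) :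
    (∑ i ∈ S, (c i : ℂ) • A i).PosSemidef := by
  apply Matrix.posSemidef_sum
  intro i hi
  exact (hA i hi).smul (by exact_mod_cast hc i hi)

lemma phB_psd (hd : 2 ≤ d) (b : Bool) : (phB d b).PosSemidef := by
  cases b
  · simpa [phB] using phic_psd hd
  · simpa [phB] using phi_psd hd

lemma PT_psd (hd : 2 ≤ d) (T : Finset E) : (PT d E T).PosSemidef := by
  rw [PT_eq_s7]; exact tpM_psd _ fun e => phB_psd hd _

/-- local basis -/
noncomputable def rB (d : ℕ) (k : Prop) [Decidable k] (s : Bool) :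
    Matrix (Fin d × Fin d) (Fin d × Fin d) ℂ :=
  if k then ((1 / (2 * d) : ℝ) : ℂ) • (1 + sgB s • swM d) else phB d s

lemma rB_psd (hd : 2 ≤ d) (k : Prop) [Decidable k] (s : Bool) : (rB d k s).PosSemidef := by
  unfold rB
  split_ifs
  · exact (sw_psd s).smul (by norm_cast; positivity)
  · exact phB_psd hd s

lemma gamM_sub (A B : Matrix (Fin d × Fin d) (Fin d × Fin d) ℂ) :
    gamM (A - B) = gamM A - gamM B := rfl

lemma rB_sum (hd : 2 ≤ d) (k : Prop) [Decidable k] (t : Bool) :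
    (if k then gamM (phB d t) else phB d t) = ∑ s, (mB d k t s : ℂ) • rB d k s := by
  have h0 : (d : ℂ) ≠ 0 := by norm_cast; omega
  by_cases hk : k
  · cases t
    · simp only [hk, if_true, phB, gamM_sub, gam_one, gam_phi, mB, rB, sgB, Fintype.sum_bool]
      simp [gamM_sub, gam_one, gam_phi]
      ext x y
      simp only [Matrix.add_apply, Matrix.smul_apply, Matrix.sub_apply, Matrix.neg_apply, smul_eq_mul]
      generalize (1 : Matrix (Fin d × Fin d) (Fin d × Fin d) ℂ) x y = J
      generalize swM d x y = F
      field_simp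
      ring
    · simp only [hk, if_true, phB, gamM_sub, gam_one, gam_phi, mB, rB, sgB, Fintype.sum_bool]
      simp [gamM_sub, gam_one, gam_phi]
      ext x y
      simp only [Matrix.add_apply, Matrix.smul_apply, Matrix.sub_apply, Matrix.neg_apply, smul_eq_mul]
      generalize (1 : Matrix (Fin d × Fin d) (Fin d × Fin d) ℂ) x y = J
      generalize swM d x y = F
      field_simp
      ring
  · cases t <;> simp [hk, mB, rB]

lemma ptK_PT (hd : 2 ≤ d) (K T : Finset E) :
    ptK d E K (PT d E T) = ∑ s : E → Bool,
      ((∏ e, mB d (e ∈ K) (decide (e ∈ T)) (s e) : ℝ) : ℂ) • tpM (fun e => rB d (e ∈ K) (s e)) := by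
  rw [PT_eq_s7, ptK_tp]
  simp only [rB_sum hd]
  rw [tpM_sum]
  simp only [tpM_smul]
  push_cast
  rfl

lemma ptK_sum {ι : Type*} (S : Finset ι) (c : ι → ℂ) (K : Finset E)
    (A : ι → Matrix (E → Fin d × Fin d) (E → Fin d × Fin d) ℂ) :
    ptK d E K (∑ i ∈ S, c i • A i) = ∑ i ∈ S, c i • ptK d E K (A i) := by
  ext x y
  simp [ptK, Matrix.sum_apply]

lemma back (hd : 2 ≤ d) (K : Finset E) (w q : Finset E → ℝ) (hq : ∀ T, q T ≤ w T)
    (h : ∀ s : E → Bool, 0 ≤ ∑ T : Finset E, q T * ∏ e, mB d (e ∈ K) (decide (e ∈ T)) (s e)) :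
    ∃ Q : Matrix (E → Fin d × Fin d) (E → Fin d × Fin d) ℂ, Q.PosSemidef ∧
      ((∑ T : Finset E, (w T : ℂ) • PT d E T) - ptK d E K Q).PosSemidef := by
  refine ⟨ptK d E K (∑ T : Finset E, (q T : ℂ) • PT d E T), ?_, ?_⟩
  · rw [ptK_sum]
    simp only [ptK_PT hd, Finset.smul_sum, smul_smul]
    rw [Finset.sum_comm]
    simp only [← Finset.sum_smul]
    have := sum_smul_psd Finset.univ _ (fun s : E → Bool => tpM (fun e => rB d (e ∈ K) (s e)))
      (fun s _ => h s) (fun s _ => tpM_psd _ fun e => rB_psd hd _ _)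
    push_cast at this ⊢
    exact this
  · rw [ptK_invol, ← Finset.sum_sub_distrib]
    simp only [← sub_smul]
    have := sum_smul_psd Finset.univ (fun T => w T - q T) (fun T => PT d E T)
      (fun T _ => sub_nonneg.2 (hq T)) (fun T _ => PT_psd hd T)
    push_cast at this
    exact this

noncomputable def trB (d : ℕ) (t : Bool) : ℝ := if t then 1 else (d : ℝ) ^ 2 - 1

lemma trB_pos (hd : 2 ≤ d) (t : Bool) : 0 < trB d t := by
  have : (2 : ℝ) ≤ d := by exact_mod_cast hd
  cases t <;> simp [trB]
  nlinarith

lemma phB_trace (hd : 2 ≤ d) (t : Bool) : (phB d t).trace = trB d t := by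
  cases t <;> simp [phB, trB, phi_trace hd]
  ring

lemma phB_mul (hd : 2 ≤ d) (t t' : Bool) : phB d t * phB d t' = if t = t' then phB d t else 0 := by
  cases t <;> cases t' <;> simp [phB, Matrix.mul_sub, Matrix.sub_mul, phi_sq hd]

noncomputable def trT (d : ℕ) (T : Finset E) : ℝ := ∏ e, trB d (decide (e ∈ T))

lemma trT_pos (hd : 2 ≤ d) (T : Finset E) : 0 < trT d T := Finset.prod_pos fun _ _ => trB_pos hd _

lemma PT_mul_trace (hd : 2 ≤ d) (T T' : Finset E) :
    (PT d E T * PT d E T').trace = if T = T' then (trT d T : ℂ) else 0 := by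
  rw [PT_eq_s7, PT_eq_s7, tpM_mul, tpM_trace]
  simp only [phB_mul hd]
  split_ifs with h
  · subst h
    simp [phB_trace hd, trT]
  · have : ∃ e, ¬ (e ∈ T ↔ e ∈ T') := by
      by_contra! hc
      exact h (Finset.ext hc)
    obtain ⟨e, he⟩ := this
    exact Finset.prod_eq_zero (Finset.mem_univ e) (by simp [he])

lemma dual_psd (hd : 2 ≤ d) (k : Prop) [Decidable k] (s : Bool) :
    (if k then gamM (∑ t, ((mB d k t s / trB d t : ℝ) : ℂ) • phB d t)
      else ∑ t, ((mB d k t s / trB d t : ℝ) : ℂ) • phB d t).PosSemidef := by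
  have h2 : (2 : ℝ) ≤ d := by exact_mod_cast hd
  have h0 : (d : ℂ) ≠ 0 := by norm_cast; omega
  have h1 : (d : ℂ) - 1 ≠ 0 := by
    intro h
    have : (d : ℂ) = ((1 : ℕ) : ℂ) := by push_cast; linear_combination h
    have := Nat.cast_injective this
    omega
  have h3 : (d : ℂ) + 1 ≠ 0 := by norm_cast
  have h4 : (d : ℂ) ^ 2 - 1 ≠ 0 := by
    have : (d : ℂ) ^ 2 - 1 = (d - 1) * (d + 1) := by ring
    rw [this]; exact mul_ne_zero h1 h3
  have hlin : ∀ a b : ℂ, gamM (a • phiM d + b • (1 - phiM d)) =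
      a • (((1 : ℂ) / d) • swM d) + b • (1 - ((1 : ℂ) / d) • swM d) := by
    intro a b
    rw [← gam_phi]
    nth_rewrite 2 [← gam_one]
    rfl
  by_cases hk : k
  · simp only [hk, if_true]
    cases s
    · have : gamM (∑ t, ((mB d True t false / trB d t : ℝ) : ℂ) • phB d t)
        = ((1 / ((d : ℝ) + 1) : ℝ) : ℂ) • (1 + sgB false • swM d) := by
        simp only [phB, mB, trB, sgB, Fintype.sum_bool, if_true, Bool.false_eq_true, if_false]
        rw [hlin]
        simp
        ext x y
        simp only [Matrix.add_apply, Matrix.smul_apply, Matrix.sub_apply, Matrix.neg_apply, smul_eq_mul]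
        generalize (1 : Matrix (Fin d × Fin d) (Fin d × Fin d) ℂ) x y = J
        generalize swM d x y = F
        field_simp
        ring
      rw [this]
      refine (sw_psd false).smul ?_
      have : 0 ≤ 1 / ((d : ℝ) + 1) := by positivity
      exact_mod_cast this
    · have : gamM (∑ t, ((mB d True t true / trB d t : ℝ) : ℂ) • phB d t)
        = ((1 / ((d : ℝ) - 1) : ℝ) : ℂ) • (1 + sgB true • swM d) := by
        simp only [phB, mB, trB, sgB, Fintype.sum_bool, if_true, Bool.false_eq_true, if_false]
        rw [hlin]
        simp
        ext x y
        simp only [Matrix.add_apply, Matrix.smul_apply, Matrix.sub_apply, Matrix.neg_apply, smul_eq_mul]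
        generalize (1 : Matrix (Fin d × Fin d) (Fin d × Fin d) ℂ) x y = J
        generalize swM d x y = F
        field_simp
        ring
      rw [this]
      refine (sw_psd true).smul ?_
      have : 0 ≤ 1 / ((d : ℝ) - 1) := by
        have : 0 ≤ (d : ℝ) - 1 := by linarith
        positivity
      exact_mod_cast this
  · simp only [hk, if_false]
    refine sum_smul_psd Finset.univ (fun t => mB d False t s / trB d t) _ ?_ fun t _ => phB_psd hd t
    intro t _
    refine div_nonneg ?_ (trB_pos hd t).le
    simp only [mB, if_false]
    split_ifs <;> norm_num

lemma forw (hd : 2 ≤ d) (K : Finset E) (w : Finset E → ℝ)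
    (Q : Matrix (E → Fin d × Fin d) (E → Fin d × Fin d) ℂ) (hQ : Q.PosSemidef)
    (hW : ((∑ T : Finset E, (w T : ℂ) • PT d E T) - ptK d E K Q).PosSemidef) :
    ∃ q : Finset E → ℝ, (∀ T, q T ≤ w T) ∧
    ∀ s : E → Bool, 0 ≤ ∑ T : Finset E, q T * ∏ e, mB d (e ∈ K) (decide (e ∈ T)) (s e) := by
  refine ⟨fun T => (ptK d E K Q * PT d E T).trace.re / trT d T, ?_, ?_⟩
  · intro T
    have h := trace_mul_psd hW (PT_psd hd T)
    rw [Matrix.sub_mul, Matrix.trace_sub, Finset.sum_mul, Matrix.trace_sum] at h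
    simp only [Matrix.smul_mul, Matrix.trace_smul, PT_mul_trace hd] at h
    simp only [smul_eq_mul, mul_ite, mul_zero, Finset.sum_ite_eq', Finset.mem_univ, if_true] at h
    have h' := (Complex.le_def.1 h).1
    rw [div_le_iff₀ (trT_pos hd T)]
    simp at h'
    linarith
  · intro s
    have hX := tpM_psd (fun e => (if e ∈ K then
      gamM (∑ t, ((mB d (e ∈ K) t (s e) / trB d t : ℝ) : ℂ) • phB d t)
      else ∑ t, ((mB d (e ∈ K) t (s e) / trB d t : ℝ) : ℂ) • phB d t)) fun e => dual_psd hd _ _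
    rw [← ptK_tp, tpM_sum'] at hX
    have h := trace_mul_psd hQ hX
    rw [← ptK_trace, Finset.mul_sum, Matrix.trace_sum] at h
    simp only [tpM_smul, ← PT_eq_s7, Matrix.mul_smul, Matrix.trace_smul, ← Complex.ofReal_prod] at h
    have h' := (Complex.le_def.1 h).1
    rw [Complex.re_sum] at h'
    simp only [smul_eq_mul, Complex.re_ofReal_mul, Complex.zero_re] at h'
    refine h'.trans (le_of_eq ?_)
    refine Finset.sum_congr rfl fun T _ => ?_
    rw [Finset.prod_div_distrib]
    simp only [trT]
    ring

end aux

/-- Linear-program characterization of sub-symmetric witnesses: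
for `W = Σ_T w_T P_T`, full decomposability with respect to all cuts `∂S` is equivalent to the
existence of real numbers `q_T(S) ≤ w_T` satisfying the stated linear inequalities. -/
theorem stmt_7 (d : ℕ) (hd : 2 ≤ d) (V : Type*) [Fintype V] [DecidableEq V]
    (G : SimpleGraph V) [DecidableRel G.Adj] (hconn : G.Connected)
    (hV : 2 ≤ Fintype.card V) (w : Finset ↥G.edgeSet → ℝ) :
    (∀ S : Finset V, S.Nonempty → S ≠ Finset.univ →
      ∃ Q : Matrix (↥G.edgeSet → Fin d × Fin d) (↥G.edgeSet → Fin d × Fin d) ℂ,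
        Q.PosSemidef ∧
        ((∑ T : Finset ↥G.edgeSet, (w T : ℂ) • PT d ↥G.edgeSet T)
          - ptK d ↥G.edgeSet (bdE G S) Q).PosSemidef)
    ↔
    (∀ S : Finset V, S.Nonempty → S ≠ Finset.univ →
      ∃ q : Finset ↥G.edgeSet → ℝ, (∀ T, q T ≤ w T) ∧
        ∀ Ttil : Finset ↥G.edgeSet, Ttil ⊆ (bdE G S)ᶜ →
        ∀ s : ↥G.edgeSet → Bool,
          0 ≤ ∑ T ∈ (bdE G S).powerset,
            q (T ∪ Ttil) * ((∏ e ∈ T, (if s e then (-1 : ℝ) else 1)) *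
              ∏ e ∈ bdE G S \ T, (if s e then ((d : ℝ) + 1) else ((d : ℝ) - 1)))) := by
  refine forall_congr' fun S => forall_congr' fun _ => forall_congr' fun _ => ?_
  constructor
  · rintro ⟨Q, hQ, hW⟩
    obtain ⟨q, hq, h⟩ := forw hd (bdE G S) w Q hQ hW
    refine ⟨q, hq, fun Ttil hT s => ?_⟩
    rw [sum_conv (bdE G S) Ttil hT q s _ (fun e => rfl)]
    exact h _
  · rintro ⟨q, hq, h⟩
    refine back hd (bdE G S) w q hq fun s => ?_
    have h1 := h ((bdE G S)ᶜ.filter (fun e => s e = true)) (Finset.filter_subset _ _) s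
    rw [sum_conv (bdE G S) _ (Finset.filter_subset _ _) q s s] at h1
    · exact h1
    · intro e
      by_cases he : e ∈ bdE G S <;> simp [he]
end

section
/- The E-SSW is fully decomposable: define W_E = −d · ⊗_{e∈E} Φ_e + ((d+1)^{1−|E|}/2) · ⊗_{e∈E} (I_e + d·Φ_e) on the total space. Then for every nonempty subset T ⊆ E there exists a matrix Q with 0 ⪯ Q ⪯ I and Q^{Γ_T} ⪯ W_E. -/
open Matrix Finset
open scoped ComplexOrder

/-- The `E`-SSW: `W_E = −d·⊗_{e∈E} Φ_e + ((d+1)^{1−|E|}/2)·⊗_{e∈E}(I_e + d·Φ_e)`. -/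
noncomputable def WE (d : ℕ) (E : Type*) [Fintype E] [DecidableEq E] :
    Matrix (E → Fin d × Fin d) (E → Fin d × Fin d) ℂ :=
  (-(d : ℂ)) • Matrix.of (fun x y => ∏ e, phiM d (x e) (y e))
    + ((((d : ℂ) + 1) ^ ((1 : ℤ) - (Fintype.card E : ℤ)) / 2)) •
      Matrix.of (fun x y => ∏ e, ((1 : Matrix (Fin d × Fin d) (Fin d × Fin d) ℂ)
        + (d : ℂ) • phiM d) (x e) (y e))

namespace SSW

/-- Tensor product over the edges. -/
def tens {d : ℕ} {E : Type*} [Fintype E]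
    (M : E → Matrix (Fin d × Fin d) (Fin d × Fin d) ℂ) :
    Matrix (E → Fin d × Fin d) (E → Fin d × Fin d) ℂ :=
  Matrix.of fun x y => ∏ e, M e (x e) (y e)

/-- The swap operator. -/
def sw (d : ℕ) : Matrix (Fin d × Fin d) (Fin d × Fin d) ℂ :=
  Matrix.of fun p q => if p.1 = q.2 ∧ p.2 = q.1 then 1 else 0

lemma tens_mul {d : ℕ} {E : Type*} [Fintype E] [DecidableEq E]
    (M N : E → Matrix (Fin d × Fin d) (Fin d × Fin d) ℂ) :
    tens M * tens N = tens (fun e => M e * N e) := by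
  ext x y
  simp only [tens, Matrix.mul_apply, Matrix.of_apply, ← Finset.prod_mul_distrib]
  rw [Fintype.prod_sum]

lemma tens_conj {d : ℕ} {E : Type*} [Fintype E]
    (M : E → Matrix (Fin d × Fin d) (Fin d × Fin d) ℂ) :
    (tens M)ᴴ = tens (fun e => (M e)ᴴ) := by
  ext x y
  simp [tens, Matrix.conjTranspose_apply]

open scoped MatrixOrder Matrix.Norms.L2Operator in
lemma tens_psd {d : ℕ} {E : Type*} [Fintype E] [DecidableEq E]
    (M : E → Matrix (Fin d × Fin d) (Fin d × Fin d) ℂ) (h : ∀ e, (M e).PosSemidef) :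
    (tens M).PosSemidef := by
  have h2 : ∀ e, ∃ B : Matrix (Fin d × Fin d) (Fin d × Fin d) ℂ, M e = Bᴴ * B := by
    intro e
    obtain ⟨B, hB⟩ := CStarAlgebra.nonneg_iff_eq_star_mul_self.mp (h e).nonneg
    exact ⟨B, hB⟩
  choose B hB using h2
  have : tens M = (tens B)ᴴ * tens B := by
    rw [tens_conj, tens_mul]
    congr 1
    funext e
    exact hB e
  rw [this]
  exact Matrix.posSemidef_conjTranspose_mul_self _

lemma tens_mono {d : ℕ} {E : Type*} [Fintype E] [DecidableEq E]
    (A B : E → Matrix (Fin d × Fin d) (Fin d × Fin d) ℂ) (hA : ∀ e, (A e).PosSemidef)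
    (hB : ∀ e, (B e).PosSemidef) (hAB : ∀ e, (B e - A e).PosSemidef) :
    (tens B - tens A).PosSemidef := by
  have key : ∀ S : Finset E,
      (tens B - tens (fun e => if e ∈ S then A e else B e)).PosSemidef := by
    intro S
    induction S using Finset.induction_on with
    | empty => simpa using Matrix.PosSemidef.zero
    | insert a S ha ih =>
      have h1 : (tens (fun e => if e = a then B a - A a else
          if e ∈ S then A e else B e)).PosSemidef := by
        apply tens_psd
        intro e
        split_ifs
        · exact hAB a
        · exact hA e
        · exact hB e
      have h2 := ih.add h1
      convert h2 using 1
      ext x y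
      simp only [tens, Matrix.sub_apply, Matrix.add_apply, Matrix.of_apply]
      rw [← Finset.mul_prod_erase univ (fun e => (if e ∈ insert a S then A e else B e) (x e) (y e))
          (Finset.mem_univ a),
        ← Finset.mul_prod_erase univ (fun e => (if e ∈ S then A e else B e) (x e) (y e))
          (Finset.mem_univ a),
        ← Finset.mul_prod_erase univ (fun e => (if e = a then B a - A a else
          if e ∈ S then A e else B e) (x e) (y e)) (Finset.mem_univ a)]
      have e1 : ∏ e ∈ univ.erase a, (if e ∈ insert a S then A e else B e) (x e) (y e)
          = ∏ e ∈ univ.erase a, (if e ∈ S then A e else B e) (x e) (y e) := by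
        apply Finset.prod_congr rfl
        intro e he
        simp [Finset.ne_of_mem_erase he]
      have e2 : ∏ e ∈ univ.erase a, (if e = a then B a - A a else
          if e ∈ S then A e else B e) (x e) (y e)
          = ∏ e ∈ univ.erase a, (if e ∈ S then A e else B e) (x e) (y e) := by
        apply Finset.prod_congr rfl
        intro e he
        simp [Finset.ne_of_mem_erase he]
      rw [e1, e2]
      simp [ha]
      ring
  simpa using key univ

lemma tens_one {d : ℕ} {E : Type*} [Fintype E] [DecidableEq E] :
    tens (fun _ : E => (1 : Matrix (Fin d × Fin d) (Fin d × Fin d) ℂ)) = 1 := by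
  ext x y
  simp only [tens, Matrix.of_apply, Matrix.one_apply]
  rw [Finset.prod_ite_zero]
  simp [funext_iff]

lemma phi_herm (d : ℕ) : (phiM d)ᴴ = phiM d := by
  ext p q
  simp [phiM, Matrix.conjTranspose_apply, and_comm, apply_ite (star : ℂ → ℂ)]

lemma phi_sq (d : ℕ) (hd : 2 ≤ d) : phiM d * phiM d = phiM d := by
  have hd0 : (d : ℂ) ≠ 0 := by
    have : d ≠ 0 := by omega
    exact_mod_cast this
  ext p q
  simp only [phiM, Matrix.mul_apply, Matrix.of_apply, Fintype.sum_prod_type]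
  by_cases h1 : p.1 = p.2 <;> by_cases h2 : q.1 = q.2 <;> simp [h1, h2, hd0]

lemma sw_herm (d : ℕ) : (sw d)ᴴ = sw d := by
  ext p q
  simp only [sw, Matrix.conjTranspose_apply, Matrix.of_apply]
  have : (q.1 = p.2 ∧ q.2 = p.1) ↔ (p.1 = q.2 ∧ p.2 = q.1) := by
    constructor <;> rintro ⟨a, b⟩ <;> exact ⟨b.symm, a.symm⟩
  simp [this, apply_ite (star : ℂ → ℂ)]

lemma sw_sq (d : ℕ) : sw d * sw d = 1 := by
  ext p q
  obtain ⟨a, b⟩ := p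
  obtain ⟨c, e⟩ := q
  simp only [sw, Matrix.mul_apply, Matrix.of_apply, Fintype.sum_prod_type, Matrix.one_apply,
    Prod.mk.injEq]
  by_cases h1 : a = c <;> by_cases h2 : b = e <;> simp [h1, h2, ite_and, eq_comm]

/-- A hermitian idempotent is PSD. -/
lemma proj_psd {n : Type*} [Fintype n] (P : Matrix n n ℂ) (h1 : Pᴴ = P) (h2 : P * P = P) :
    P.PosSemidef := by
  have := Matrix.posSemidef_conjTranspose_mul_self P
  rwa [h1, h2] at this

lemma phi_psd (d : ℕ) (hd : 2 ≤ d) : (phiM d).PosSemidef :=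
  proj_psd _ (phi_herm d) (phi_sq d hd)

lemma phi_le (d : ℕ) (hd : 2 ≤ d) : (1 - phiM d).PosSemidef := by
  apply proj_psd
  · simp [phi_herm]
  · simp [mul_sub, sub_mul, phi_sq d hd]

lemma sym_psd (d : ℕ) : ((1 / 2 : ℂ) • (1 + sw d)).PosSemidef := by
  apply proj_psd
  · simp [sw_herm]
  · simp only [smul_mul_smul_comm, mul_add, add_mul, sw_sq, mul_one, one_mul]
    module

lemma asym_psd (d : ℕ) : ((1 / 2 : ℂ) • (1 - sw d)).PosSemidef := by
  apply proj_psd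
  · simp [sw_herm]
  · simp only [smul_mul_smul_comm, mul_sub, sub_mul, sw_sq, mul_one, one_mul]
    module

lemma coef_nonneg (a : ℝ) (h : 0 ≤ a) : (0 : ℂ) ≤ (a : ℂ) := by exact_mod_cast h

/-- The normalised operator `(I + dΦ)/(d+1)`. -/
noncomputable def Bm (d : ℕ) : Matrix (Fin d × Fin d) (Fin d × Fin d) ℂ :=
  (1 / ((d : ℂ) + 1)) • (1 + (d : ℂ) • phiM d)

/-- The normalised operator `(I + F)/(d+1)`. -/
noncomputable def Sm (d : ℕ) : Matrix (Fin d × Fin d) (Fin d × Fin d) ℂ :=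
  (1 / ((d : ℂ) + 1)) • (1 + sw d)

lemma dp (d : ℕ) : (d : ℂ) + 1 ≠ 0 := by exact_mod_cast Nat.succ_ne_zero d

lemma c1 (d : ℕ) : (0 : ℂ) ≤ 1 / ((d : ℂ) + 1) := by
  have := coef_nonneg (1 / ((d : ℝ) + 1)) (by positivity)
  simpa using this

lemma c2 (d : ℕ) : (0 : ℂ) ≤ (d : ℂ) / ((d : ℂ) + 1) := by
  have := coef_nonneg ((d : ℝ) / ((d : ℝ) + 1)) (by positivity)
  simpa using this

lemma B_psd (d : ℕ) (hd : 2 ≤ d) : (Bm d).PosSemidef :=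
  (Matrix.PosSemidef.one.add ((phi_psd d hd).smul (Nat.cast_nonneg d))).smul (c1 d)

lemma B_le (d : ℕ) (hd : 2 ≤ d) : (1 - Bm d).PosSemidef := by
  have := (phi_le d hd).smul (c2 d)
  convert this using 1
  have := dp d
  unfold Bm
  match_scalars <;> field_simp <;> ring

lemma phi_le_B (d : ℕ) (hd : 2 ≤ d) : (Bm d - phiM d).PosSemidef := by
  have := (phi_le d hd).smul (c1 d)
  convert this using 1
  have := dp d
  unfold Bm
  match_scalars <;> field_simp <;> ring

lemma S_psd (d : ℕ) : (Sm d).PosSemidef := by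
  have := (sym_psd d).smul (c1 d) 
  have := this.add this
  convert this using 1
  have := dp d
  unfold Sm
  match_scalars <;> field_simp <;> ring

lemma S_le (d : ℕ) (hd : 2 ≤ d) : (1 - Sm d).PosSemidef := by
  have h1 := (asym_psd d).smul (c1 d)
  have h2 : (((((d : ℝ) - 1) / ((d : ℝ) + 1) : ℝ) : ℂ) •
      (1 : Matrix (Fin d × Fin d) (Fin d × Fin d) ℂ)).PosSemidef := by
    apply Matrix.PosSemidef.one.smul
    apply coef_nonneg
    have : (2 : ℝ) ≤ d := by exact_mod_cast hd
    apply div_nonneg <;> linarith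
  convert (h1.add h1).add h2 using 1
  have := dp d
  unfold Sm
  push_cast
  match_scalars <;> field_simp <;> ring

lemma asym_le (d : ℕ) : (1 - (1 / 2 : ℂ) • (1 - sw d)).PosSemidef := by
  convert sym_psd d using 1
  module

/-- The local factors of the operator `Q`. -/
noncomputable def qf (d : ℕ) {E : Type*} [DecidableEq E] (T : Finset E) (a : E) (e : E) :
    Matrix (Fin d × Fin d) (Fin d × Fin d) ℂ :=
  if e = a then (1 / 2 : ℂ) • (1 - sw d) else if e ∈ T then Sm d else Bm d

lemma one_pt (d : ℕ) (p q : Fin d × Fin d) :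
    (1 : Matrix (Fin d × Fin d) (Fin d × Fin d) ℂ) (q.1, p.2) (p.1, q.2)
      = (1 : Matrix (Fin d × Fin d) (Fin d × Fin d) ℂ) p q := by
  obtain ⟨a, b⟩ := p
  obtain ⟨c, e⟩ := q
  simp [Matrix.one_apply, eq_comm]

lemma sw_pt (d : ℕ) (hd : 2 ≤ d) (p q : Fin d × Fin d) :
    sw d (q.1, p.2) (p.1, q.2) = (d : ℂ) * phiM d p q := by
  have hd0 : (d : ℂ) ≠ 0 := by
    have : d ≠ 0 := by omega
    exact_mod_cast this
  obtain ⟨a, b⟩ := p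
  obtain ⟨c, e⟩ := q
  simp only [sw, phiM, Matrix.of_apply]
  by_cases h1 : a = b <;> by_cases h2 : c = e <;> simp [h1, h2, hd0, eq_comm]

lemma pt_Q (d : ℕ) (hd : 2 ≤ d) {E : Type*} [Fintype E] [DecidableEq E] (T : Finset E) (a : E)
    (ha : a ∈ T) :
    ptK d E T (tens (qf d T a)) = tens (fun e => if e = a then
      (1 / 2 : ℂ) • (1 - (d : ℂ) • phiM d) else Bm d) := by
  ext x y
  simp only [ptK, tens, Matrix.of_apply]
  apply Finset.prod_congr rfl
  intro e _
  unfold qf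
  by_cases h1 : e = a
  · subst h1
    simp [ha, one_pt, sw_pt d hd]
  · by_cases h2 : e ∈ T
    · simp [h1, h2, Sm, Bm, one_pt, sw_pt d hd]
    · simp [h1, h2]

lemma final (d : ℕ) {E : Type*} [Fintype E] [DecidableEq E] (a : E) :
    WE d E - tens (fun e => if e = a then
      (1 / 2 : ℂ) • (1 - (d : ℂ) • phiM d) else Bm d)
    = tens (fun e => if e = a then (d : ℂ) • phiM d else Bm d)
      - tens (fun e => if e = a then (d : ℂ) • phiM d else phiM d) := by
  have hd := dp d
  have hf : ∀ (X Y : Matrix (Fin d × Fin d) (Fin d × Fin d) ℂ) (x y : E → Fin d × Fin d),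
      ∏ e, (if e = a then X else Y) (x e) (y e)
        = X (x a) (y a) * ∏ e ∈ univ.erase a, Y (x e) (y e) := by
    intro X Y x y
    rw [← Finset.mul_prod_erase univ _ (Finset.mem_univ a)]
    congr 1
    · simp
    · apply Finset.prod_congr rfl
      intro e he
      simp [Finset.ne_of_mem_erase he]
  have hB : ∀ x y : E → Fin d × Fin d, ∏ e ∈ univ.erase a, Bm d (x e) (y e)
      = ((d : ℂ) + 1) ^ ((1 : ℤ) - (Fintype.card E : ℤ)) *
        ∏ e ∈ univ.erase a, ((1 : Matrix (Fin d × Fin d) (Fin d × Fin d) ℂ)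
        + (d : ℂ) • phiM d) (x e) (y e) := by
    intro x y
    simp only [Bm, Matrix.smul_apply (1 / ((d : ℂ) + 1)), smul_eq_mul, Finset.prod_mul_distrib,
      Finset.prod_const]
    congr 1
    have hc : 1 ≤ Fintype.card E := Fintype.card_pos_iff.mpr ⟨a⟩
    rw [Finset.card_erase_of_mem (Finset.mem_univ a), Finset.card_univ, one_div, inv_pow,
      ← zpow_natCast, ← _root_.zpow_neg]
    congr 1
    push_cast [hc]
    ring
  ext x y
  simp only [WE, tens, Matrix.sub_apply, Matrix.add_apply, Matrix.of_apply, hf, hB]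
  rw [Matrix.smul_apply, Matrix.smul_apply, Matrix.of_apply, Matrix.of_apply,
    ← Finset.mul_prod_erase univ _ (Finset.mem_univ a),
    ← Finset.mul_prod_erase univ (fun e => (1 : Matrix (Fin d × Fin d) (Fin d × Fin d) ℂ) (x e) (y e)
        + ((d : ℂ) • phiM d) (x e) (y e)) (Finset.mem_univ a)]
  generalize ∏ e ∈ univ.erase a, ((1 : Matrix (Fin d × Fin d) (Fin d × Fin d) ℂ) (x e) (y e)
        + ((d : ℂ) • phiM d) (x e) (y e)) = P
  generalize ∏ e ∈ univ.erase a, phiM d (x e) (y e) = R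
  simp only [Matrix.smul_apply, Matrix.sub_apply, Matrix.add_apply, smul_eq_mul]
  ring

end SSW

/-- The `E`-SSW is fully decomposable: for every nonempty `T ⊆ E` there is a
matrix `Q` with `0 ⪯ Q ⪯ I` and `Q^{Γ_T} ⪯ W_E`. -/
theorem stmt_10 (d : ℕ) (hd : 2 ≤ d) (E : Type*) [Fintype E] [DecidableEq E] [Nonempty E]
    (T : Finset E) (hT : T.Nonempty) :
    ∃ Q : Matrix (E → Fin d × Fin d) (E → Fin d × Fin d) ℂ,
      Q.PosSemidef ∧ (1 - Q).PosSemidef ∧ (WE d E - ptK d E T Q).PosSemidef := by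
  obtain ⟨a, ha⟩ := hT
  have hq : ∀ e, (SSW.qf d T a e).PosSemidef := by
    intro e
    unfold SSW.qf
    split_ifs
    · exact SSW.asym_psd d
    · exact SSW.S_psd d
    · exact SSW.B_psd d hd
  have hdphi : ((d : ℂ) • phiM d).PosSemidef := (SSW.phi_psd d hd).smul (Nat.cast_nonneg d)
  refine ⟨SSW.tens (SSW.qf d T a), SSW.tens_psd _ hq, ?_, ?_⟩
  · rw [← SSW.tens_one]
    apply SSW.tens_mono _ _ hq (fun _ => Matrix.PosSemidef.one)
    intro e
    unfold SSW.qf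
    split_ifs
    · exact SSW.asym_le d
    · exact SSW.S_le d hd
    · exact SSW.B_le d hd
  · rw [SSW.pt_Q d hd T a ha, SSW.final]
    apply SSW.tens_mono
    · intro e
      split_ifs
      · exact hdphi
      · exact SSW.phi_psd d hd
    · intro e
      split_ifs
      · exact hdphi
      · exact SSW.B_psd d hd
    · intro e
      split_ifs
      · simpa using Matrix.PosSemidef.zero
      · exact SSW.phi_le_B d hd
end

section
/- PPT-mixture decomposition of the isotropic network state: for every real γ and every nonempty finite edge set E, ⊗_{e∈E} (Φ_e + γ(I_e − Φ_e)) = ((2d − (d+1)(1+(d−1)γ)^{|E|})/(d−1)) · ⊗_{e∈E} Φ_e + Σ_{T ⊆ E, T ≠ ∅} γ^{|T|} · ρ_T ⊗ ⊗_{e∉T} Φ_e, where ρ_T = ⊗_{e∈T} (I_e − Φ_e) + (d+1)(d−1)^{|T|−1} · ⊗_{e∈T} Φ_e. -/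
open Matrix Finset
open scoped ComplexOrder

lemma aux_decomp {E : Type*} [Fintype E] [DecidableEq E] (a b : E → ℂ) (g D : ℂ)
    (hc : D - 1 ≠ 0) :
    ∏ e, (a e + g * b e) =
      ((2 * D - (D + 1) * (1 + (D - 1) * g) ^ Fintype.card E) / (D - 1)) * ∏ e, a e
      + ∑ T ∈ Finset.univ.filter (fun T : Finset E => T.Nonempty),
          g ^ T.card * (((∏ e ∈ T, b e) + (D + 1) * (D - 1) ^ (T.card - 1) * ∏ e ∈ T, a e)
            * ∏ e ∈ Tᶜ, a e) := by
  have hsplit : ∀ f : Finset E → ℂ, ∑ T, f T =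
      f ∅ + ∑ T ∈ Finset.univ.filter (fun T : Finset E => T.Nonempty), f T := by
    intro f
    rw [← Finset.add_sum_erase _ f (Finset.mem_univ ∅)]
    congr 2
    ext T
    simp [Finset.nonempty_iff_ne_empty]
  have h1 : ∏ e, (a e + g * b e) =
      ∑ T : Finset E, g ^ T.card * ((∏ e ∈ T, b e) * ∏ e ∈ Tᶜ, a e) := by
    simp_rw [add_comm (a _)]
    rw [Fintype.prod_add]
    refine Finset.sum_congr rfl fun T _ => ?_
    rw [Finset.prod_mul_distrib, Finset.prod_const, mul_assoc]
  have h2 : (1 + (D - 1) * g) ^ Fintype.card E = ∑ T : Finset E, ((D - 1) * g) ^ T.card := by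
    have := Fintype.prod_add (fun _ : E => (D - 1) * g) (fun _ => (1 : ℂ))
    simpa [add_comm] using this
  rw [hsplit] at h1 h2
  have h3 : ∑ T ∈ Finset.univ.filter (fun T : Finset E => T.Nonempty),
          g ^ T.card * (((∏ e ∈ T, b e) + (D + 1) * (D - 1) ^ (T.card - 1) * ∏ e ∈ T, a e)
            * ∏ e ∈ Tᶜ, a e) =
      ∑ T ∈ Finset.univ.filter (fun T : Finset E => T.Nonempty),
          g ^ T.card * ((∏ e ∈ T, b e) * ∏ e ∈ Tᶜ, a e)
      + (D + 1) / (D - 1) * (∏ e, a e) *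
        ∑ T ∈ Finset.univ.filter (fun T : Finset E => T.Nonempty), ((D - 1) * g) ^ T.card := by
    rw [Finset.mul_sum, ← Finset.sum_add_distrib]
    refine Finset.sum_congr rfl fun T hT => ?_
    have hT' : T.Nonempty := by simpa using hT
    obtain ⟨n, hn⟩ := Nat.exists_eq_succ_of_ne_zero hT'.card_pos.ne'
    rw [← Finset.prod_mul_prod_compl T a, hn, mul_pow, Nat.succ_sub_one, pow_succ (D - 1)]
    field_simp
  rw [h3, h1, h2]
  simp only [Finset.card_empty, pow_zero, Finset.prod_empty, Finset.compl_empty, one_mul]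
  field_simp
  ring

/-- PPT-mixture decomposition of the isotropic network state:
`⊗_{e∈E}(Φ_e + γ(I_e − Φ_e))
  = ((2d − (d+1)(1+(d−1)γ)^{|E|})/(d−1))·⊗_{e∈E} Φ_e
    + Σ_{∅ ≠ T ⊆ E} γ^{|T|}·(ρ_T ⊗ ⊗_{e∉T} Φ_e)`,
with `ρ_T = ⊗_{e∈T}(I_e − Φ_e) + (d+1)(d−1)^{|T|−1}·⊗_{e∈T} Φ_e`. -/
theorem stmt_14 (d : ℕ) (hd : 2 ≤ d) (E : Type*) [Fintype E] [DecidableEq E] [Nonempty E]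
    (γ : ℝ) :
    Matrix.of (fun x y : E → Fin d × Fin d => ∏ e,
        (phiM d (x e) (y e) + (γ : ℂ) *
          ((1 : Matrix (Fin d × Fin d) (Fin d × Fin d) ℂ) - phiM d) (x e) (y e)))
      = ((2 * (d : ℂ) - ((d : ℂ) + 1)
            * (1 + ((d : ℂ) - 1) * (γ : ℂ)) ^ Fintype.card E) / ((d : ℂ) - 1)) •
          Matrix.of (fun x y : E → Fin d × Fin d => ∏ e, phiM d (x e) (y e))
        + ∑ T ∈ Finset.univ.filter (fun T : Finset E => T.Nonempty),
            (γ : ℂ) ^ T.card •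
              Matrix.of (fun x y : E → Fin d × Fin d =>
                ((∏ e ∈ T, ((1 : Matrix (Fin d × Fin d) (Fin d × Fin d) ℂ) - phiM d)
                      (x e) (y e))
                  + ((d : ℂ) + 1) * ((d : ℂ) - 1) ^ (T.card - 1)
                      * ∏ e ∈ T, phiM d (x e) (y e))
                * ∏ e ∈ Tᶜ, phiM d (x e) (y e)) := by
  have hc : (d : ℂ) - 1 ≠ 0 := by
    rw [sub_ne_zero]
    exact_mod_cast (by omega : d ≠ 1)
  ext x y
  simp only [Matrix.add_apply, Matrix.smul_apply, Matrix.sum_apply, Matrix.of_apply, smul_eq_mul]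
  exact aux_decomp (fun e => phiM d (x e) (y e))
    (fun e => ((1 : Matrix (Fin d × Fin d) (Fin d × Fin d) ℂ) - phiM d) (x e) (y e)) γ d hc
end

section
/- Vanishing of the cut-weight sum for highly connected networks: let c > 1/2 be a real number and 0 ≤ x < 1. For each m, let G_m be a finite simple graph on n_m vertices in which every vertex has degree at least c·n_m, and suppose n_m → ∞ as m → ∞. Then Σ_{K ∈ B(G_m), K ≠ ∅} x^{|K|} → 0 as m → ∞. -/
open Finset Filter

/-- The edge boundary `∂S` of a vertex subset `S`, as a finite set of edges of `G`
(the edges with exactly one endpoint in `S`). -/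
def bdF {V : Type*} [Fintype V] [DecidableEq V] (G : SimpleGraph V) [DecidableRel G.Adj]
    (S : Finset V) : Finset (Sym2 V) :=
  G.edgeFinset.filter (fun e => (S.filter (fun v => v ∈ e)).card = 1)

/-- The cut space `B(G)`: the collection of all edge boundaries `∂S` for `S ⊆ V`. -/
def cutSpaceF {V : Type*} [Fintype V] [DecidableEq V] (G : SimpleGraph V)
    [DecidableRel G.Adj] : Finset (Finset (Sym2 V)) :=
  Finset.univ.filter (fun K => ∃ S : Finset V, K = bdF G S)

lemma aux_card {V : Type*} [DecidableEq V] (S : Finset V) (a b : V) (h : a ≠ b) :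
    (S.filter (fun v => v ∈ s(a, b))).card = 1 ↔ (a ∈ S ↔ b ∉ S) := by
  have : S.filter (fun v => v ∈ s(a, b)) =
      (if a ∈ S then {a} else ∅) ∪ (if b ∈ S then {b} else ∅) := by
    ext v
    simp only [Sym2.mem_iff, mem_filter, mem_union]
    split_ifs <;> simp <;> grind
  rw [this]
  by_cases ha : a ∈ S <;> by_cases hb : b ∈ S <;> simp [ha, hb, h]

lemma aux_compl {V : Type*} [Fintype V] [DecidableEq V] (G : SimpleGraph V) [DecidableRel G.Adj]
    (S : Finset V) : bdF G Sᶜ = bdF G S := by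
  ext e
  induction e using Sym2.ind with
  | _ a b =>
    simp only [bdF, mem_filter, SimpleGraph.mem_edgeFinset, SimpleGraph.mem_edgeSet]
    refine and_congr_right fun h => ?_
    rw [aux_card _ _ _ h.ne, aux_card _ _ _ h.ne]
    simp only [mem_compl]
    tauto

lemma aux_bd {V : Type*} [Fintype V] [DecidableEq V] (G : SimpleGraph V) [DecidableRel G.Adj]
    (S : Finset V) (D : ℕ) (hD : ∀ v ∈ S, D ≤ (G.neighborFinset v \ S).card) :
    D * S.card ≤ (bdF G S).card := by
  have h1 : S.card * D ≤ (S.sigma (fun v => G.neighborFinset v \ S)).card := by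
    rw [card_sigma, ← smul_eq_mul]
    exact card_nsmul_le_sum _ _ _ hD
  rw [mul_comm]
  refine h1.trans (card_le_card_of_injOn (fun p => s(p.1, p.2)) ?_ ?_)
  · rintro ⟨a, b⟩ hp
    simp only [coe_sigma, Set.mem_sigma_iff, mem_coe, Finset.mem_sdiff,
      SimpleGraph.mem_neighborFinset] at hp
    simp only [bdF, coe_filter, Set.mem_ofPred_eq, SimpleGraph.mem_edgeFinset,
      SimpleGraph.mem_edgeSet]
    refine ⟨hp.2.1, ?_⟩
    rw [aux_card _ _ _ hp.2.1.ne]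
    tauto
  · rintro ⟨a, b⟩ hp ⟨a', b'⟩ hq h
    simp only [coe_sigma, Set.mem_sigma_iff, mem_coe, Finset.mem_sdiff,
      SimpleGraph.mem_neighborFinset] at hp hq
    simp only [Sym2.eq_iff] at h
    rcases h with ⟨rfl, rfl⟩ | ⟨rfl, rfl⟩
    · rfl
    · exact absurd hp.1 hq.2.2

lemma aux_bound (c : ℝ) (x : ℝ) (hx0 : 0 ≤ x) (hx1 : x < 1)
    {V : Type*} [Fintype V] [DecidableEq V] (G : SimpleGraph V) [DecidableRel G.Adj]
    (n : ℕ) (hn : Fintype.card V = n) (hdeg : ∀ v : V, c * n ≤ G.degree v) :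
    ∑ K ∈ (cutSpaceF G).filter (fun K => K.Nonempty), x ^ K.card
      ≤ (x ^ ⌈(c - 1 / 2) * n⌉₊ + 1) ^ n - 1 := by
  set D := ⌈(c - 1 / 2) * n⌉₊ with hDdef
  set T : Finset (Finset V) := univ.filter (fun S => S.Nonempty ∧ 2 * S.card ≤ n) with hT
  have hsub : (cutSpaceF G).filter (fun K => K.Nonempty) ⊆ T.image (bdF G) := by
    intro K hK
    simp only [cutSpaceF, mem_filter, mem_univ, true_and] at hK
    obtain ⟨⟨S, rfl⟩, hne⟩ := hK
    have key : ∀ S : Finset V, (bdF G S).Nonempty → S.Nonempty := by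
      rintro S ⟨e, he⟩
      simp only [bdF, mem_filter] at he
      have : (S.filter (fun v => v ∈ e)).Nonempty := card_pos.mp (by omega)
      exact this.mono (filter_subset _ _)
    simp only [mem_image, hT, mem_filter, mem_univ, true_and]
    by_cases h : 2 * S.card ≤ n
    · exact ⟨S, ⟨key S hne, h⟩, rfl⟩
    · refine ⟨Sᶜ, ⟨key _ (by rwa [aux_compl]), ?_⟩, aux_compl G S⟩
      rw [card_compl, hn]; omega
  have hb : ∀ S ∈ T, x ^ (bdF G S).card ≤ (x ^ D) ^ S.card := by
    intro S hS
    simp only [hT, mem_filter, mem_univ, true_and] at hS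
    rw [← pow_mul]
    refine pow_le_pow_of_le_one hx0 hx1.le (aux_bd G S D fun v _ => ?_)
    rw [hDdef, Nat.ceil_le]
    have h1 : G.degree v ≤ (G.neighborFinset v \ S).card + S.card := by
      rw [← G.card_neighborFinset_eq_degree v]
      have := le_card_sdiff S (G.neighborFinset v)
      omega
    have h1' : (G.degree v : ℝ) ≤ (G.neighborFinset v \ S).card + S.card := by exact_mod_cast h1
    have h2 : (2 : ℝ) * S.card ≤ n := by exact_mod_cast hS.2
    have := hdeg v
    linarith
  have hy : 0 ≤ x ^ D := pow_nonneg hx0 _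
  calc _ ≤ ∑ K ∈ T.image (bdF G), x ^ K.card :=
        sum_le_sum_of_subset_of_nonneg hsub fun _ _ _ => pow_nonneg hx0 _
    _ ≤ ∑ S ∈ T, x ^ (bdF G S).card :=
        sum_image_le_of_nonneg fun _ _ => pow_nonneg hx0 _
    _ ≤ ∑ S ∈ T, (x ^ D) ^ S.card := sum_le_sum hb
    _ ≤ ∑ S ∈ (univ : Finset (Finset V)).erase ∅, (x ^ D) ^ S.card := by
        refine sum_le_sum_of_subset_of_nonneg ?_ fun _ _ _ => pow_nonneg hy _
        intro S hS
        simp only [hT, mem_filter, mem_univ, true_and] at hS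
        simp [hS.1.ne_empty]
    _ = (x ^ D + 1) ^ n - 1 := by
        have h := sum_pow_mul_eq_add_pow (x ^ D) 1 (univ : Finset V)
        have h2 := add_sum_erase (univ : Finset (Finset V)) (fun S => (x ^ D) ^ S.card)
          (mem_univ ∅)
        simp only [one_pow, mul_one, powerset_univ, card_univ, hn] at h
        simp only [card_empty, pow_zero] at h2
        linarith

lemma aux_lim (d x : ℝ) (hd : 0 < d) (hx0 : 0 ≤ x) (hx1 : x < 1) (n : ℕ → ℕ)
    (hinf : Tendsto (fun m => (n m : ℝ)) atTop atTop) :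
    Tendsto (fun m => (x ^ ⌈d * n m⌉₊ + 1) ^ n m - 1) atTop (nhds 0) := by
  have hD : Tendsto (fun m => ⌈d * n m⌉₊) atTop atTop :=
    tendsto_nat_ceil_atTop.comp (hinf.const_mul_atTop hd)
  have h1 := (tendsto_self_mul_const_pow_of_lt_one hx0 hx1).comp hD
  have h2 : Tendsto (fun m => Real.exp (d⁻¹ * ((⌈d * n m⌉₊ : ℝ) * x ^ ⌈d * n m⌉₊)) - 1)
      atTop (nhds 0) := by
    have := (Real.continuous_exp.tendsto _).comp (h1.const_mul d⁻¹)
    simpa using this.sub_const 1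
  refine squeeze_zero (fun m => ?_) (fun m => ?_) h2
  · have : (1 : ℝ) ≤ (x ^ ⌈d * n m⌉₊ + 1) ^ n m :=
      one_le_pow₀ (by linarith [pow_nonneg hx0 ⌈d * n m⌉₊])
    linarith
  · have hy := pow_nonneg hx0 ⌈d * n m⌉₊
    have h3 : (x ^ ⌈d * n m⌉₊ + 1) ^ n m ≤ Real.exp (n m * x ^ ⌈d * n m⌉₊) := by
      rw [Real.exp_nat_mul]
      exact pow_le_pow_left₀ (by linarith) (Real.add_one_le_exp _) _
    have h4 : (n m : ℝ) ≤ d⁻¹ * ⌈d * n m⌉₊ := by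
      rw [le_inv_mul_iff₀ hd]
      exact Nat.le_ceil _
    have h5 : Real.exp (n m * x ^ ⌈d * n m⌉₊) ≤
        Real.exp (d⁻¹ * ((⌈d * n m⌉₊ : ℝ) * x ^ ⌈d * n m⌉₊)) := by
      rw [← mul_assoc]
      gcongr
    linarith

/-- Vanishing of the cut-weight sum for highly connected networks: if
`c > 1/2`, `0 ≤ x < 1`, each graph `G m` on `n m` vertices has minimum degree at least
`c·(n m)`, and `n m → ∞`, then `Σ_{∅ ≠ K ∈ B(G m)} x^{|K|} → 0`. -/
theorem stmt_18 (c : ℝ) (hc : 1 / 2 < c) (x : ℝ) (hx0 : 0 ≤ x) (hx1 : x < 1)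
    (V : ℕ → Type*) [∀ m, Fintype (V m)] [∀ m, DecidableEq (V m)]
    (G : ∀ m, SimpleGraph (V m)) [∀ m, DecidableRel (G m).Adj]
    (n : ℕ → ℕ) (hn : ∀ m, Fintype.card (V m) = n m)
    (hdeg : ∀ m (v : V m), c * n m ≤ (G m).degree v)
    (hinf : Tendsto (fun m => (n m : ℝ)) atTop atTop) :
    Tendsto (fun m =>
        ∑ K ∈ (cutSpaceF (G m)).filter (fun K => K.Nonempty), x ^ K.card)
      atTop (nhds 0) := by
  exact squeeze_zero (fun m => sum_nonneg fun _ _ => pow_nonneg hx0 _)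
    (fun m => aux_bound c x hx0 hx1 (G m) (n m) (hn m) (hdeg m))
    (aux_lim (c - 1 / 2) x (by linarith) hx0 hx1 n hinf)
end
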